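/- arXiv:math/0408338 — 5 statements merged into one kernel-verified Lean document; each statement's English description precedes it below -/
import Mathlib

section
/- Let k be a field of characteristic zero. There exist homogeneous SL₂-invariants A, B, C, D, E of binary sextics of degrees 2, 4, 6, 10, 15 such that A, B, C, D are algebraically independent over k, E² lies in the polynomial subring k[A,B,C,D], E does not lie in k[A,B,C,D], and the invariant ring R = k[a,…,g]^{SL₂} is a free k[A,B,C,D]-module of rank 2 with basis {1, E}; i.e. R ≅ k[A,B,C,D][E]/(E² − G(A,B,C,D)) for some polynomial G, the unique irreducible relation among the generating invariants. -/
/-!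
The invariants are built by classical transvection. From a sextic `F` one forms a quartic covariant
(`quartic`), then quadratic covariants `quadL`, `quadM`, `quadN` of degrees 3, 5, 7. Then `A` is the
quadratic invariant of `F`, `B` and `C` are the two basic invariants of the quartic, `D` is the
discriminant of `quadM` and `E` is the determinant of the three quadratic covariants. Their
invariance follows from the covariance of each construction under all of `GL₂`, up to a power of
the determinant.

That there are no further invariants is a dimension count. An invariant has torus weight `0`
(`IsSL2Invariant.weight_zero`) and is annihilated by the raising operator of `𝔰𝔩₂`
(`IsSL2Invariant.raise_eq_zero`), and the same holds for each homogeneous component. Let `hwSpace k d`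
be the space of polynomials of degree `d` with these two properties. The `𝔰𝔩₂`-relations show that
the raising operator maps weight `0` onto weight `1`, so the dimension of `hwSpace k d` is the number
of monomials of degree `d` and weight `0` minus the number of those of weight `1`
(`finrank_hwSpace`). By the Molien-type computation `numMon_sub`, this difference is the `d`-th
coefficient of `(1 + t ^ 15) / ((1 - t ^ 2) (1 - t ^ 4) (1 - t ^ 6) (1 - t ^ 10))`. The computation
extracts the constant term in the weight variable from an explicit partial fraction
decomposition (`cert`).

On the other hand `A, B, C, D` are algebraically independent (`algebraicIndependent_gens`): on a
suitable four-parameter family of sextics their leading terms are independent monomials. So the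
monomials in `A, B, C, D`, and `E` times these monomials, give linearly independent elements of
`hwSpace k d`. The former live in even and the latter in odd degrees, and in each case their number
is the full dimension. Hence even-degree invariants lie in `k[A, B, C, D]` and odd-degree ones in
`k[A, B, C, D] E`; in particular `E ^ 2`, of degree 30, lies in `k[A, B, C, D]`. Directness of the sum
holds because the substitution `v ↦ -v` fixes `k[A, B, C, D]` and changes the sign of `E ≠ 0`.
-/

open MvPolynomial

/-- The binary sextic `a x^6 + 6b x^5 y + 15c x^4 y^2 + 20d x^3 y^3 + 15e x^2 y^4 +
6f x y^5 + g y^6` with coefficient vector `v = (a,b,c,d,e,f,g)`. -/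
noncomputable def sextic {A : Type*} [CommRing A] (v : Fin 7 → A) :
    MvPolynomial (Fin 2) A :=
  C (v 0) * X 0 ^ 6 + C (6 * v 1) * X 0 ^ 5 * X 1 + C (15 * v 2) * X 0 ^ 4 * X 1 ^ 2 +
    C (20 * v 3) * X 0 ^ 3 * X 1 ^ 3 + C (15 * v 4) * X 0 ^ 2 * X 1 ^ 4 +
    C (6 * v 5) * X 0 * X 1 ^ 5 + C (v 6) * X 1 ^ 6

/-- The substituted form `F(x m₁₁ + y m₂₁, x m₁₂ + y m₂₂)`. -/
noncomputable def substAct {A : Type*} [CommRing A] (M : Matrix (Fin 2) (Fin 2) A)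
    (F : MvPolynomial (Fin 2) A) : MvPolynomial (Fin 2) A :=
  aeval (fun i => C (M 0 i) * X 0 + C (M 1 i) * X 1) F

/-- `P ∈ k[a,…,g]` is SL₂-invariant: whenever `det M = 1` and `w` is the coefficient
vector of the substituted sextic, `P(w) = P(v)`. -/
def IsSL2Invariant {k : Type*} [CommRing k] (P : MvPolynomial (Fin 7) k) : Prop :=
  ∀ M : Matrix (Fin 2) (Fin 2) k, M.det = 1 →
    ∀ v w : Fin 7 → k, sextic w = substAct M (sextic v) →
      eval w P = eval v P

/-! ### Counting monomials by degree and weight -/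

section Counting

open PowerSeries LaurentPolynomial

lemma geo_mul {R : Type*} [CommRing R] (r : R) :
    (PowerSeries.mk fun n => r ^ n) * (1 - PowerSeries.C r * PowerSeries.X) = 1 := by
  have h := congrArg (PowerSeries.rescale r) (PowerSeries.mk_one_mul_one_sub_eq_one R)
  simp only [map_mul, map_sub, map_one, PowerSeries.rescale_X] at h
  convert h using 2
  ext n
  simp [PowerSeries.coeff_rescale]

/-- The constant term (coefficient of `T ^ 0`), taken coefficientwise in the power series
variable. -/
noncomputable def ct (P : PowerSeries ℤ[T;T⁻¹]) : PowerSeries ℤ :=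
  PowerSeries.mk fun n => (PowerSeries.coeff n P).coeff 0

lemma ct_add (P Q : PowerSeries ℤ[T;T⁻¹]) : ct (P + Q) = ct P + ct Q := by
  ext n; simp [ct]

lemma ct_map_mul (q : PowerSeries ℤ) (P : PowerSeries ℤ[T;T⁻¹]) :
    ct (PowerSeries.map LaurentPolynomial.C q * P) = q * ct P := by
  ext n
  simp only [ct, PowerSeries.coeff_mk, PowerSeries.coeff_mul, PowerSeries.coeff_map,
    AddMonoidAlgebra.coeff_sum, Finsupp.coe_finsetSum, Finset.sum_apply]
  refine Finset.sum_congr rfl fun x _ => ?_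
  rw [← LaurentPolynomial.smul_eq_C_mul, AddMonoidAlgebra.coeff_smul, Finsupp.smul_apply,
    smul_eq_mul]

lemma toLaurent_coeff_zero (p : Polynomial ℤ) : (Polynomial.toLaurent p).coeff 0 = p.coeff 0 := by
  rw [coeff_toLaurent]
  exact Finsupp.mapDomain_apply Nat.castEmbedding.injective _ 0

/-- A series whose coefficients are polynomials in `T` has constant term its value at `T = 0`. -/
lemma ct_pos (Y : PowerSeries (Polynomial ℤ)) :
    ct (PowerSeries.map (Polynomial.toLaurent (R := ℤ)) Y) =
      PowerSeries.map Polynomial.constantCoeff Y := by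
  ext n
  simp only [ct, PowerSeries.coeff_mk, PowerSeries.coeff_map, toLaurent_coeff_zero]
  rfl

/-- The inclusion of polynomials into Laurent polynomials sending the variable to `T⁻¹`. -/
noncomputable def toLaurentInv : Polynomial ℤ →+* ℤ[T;T⁻¹] :=
  ((LaurentPolynomial.invert (R := ℤ)).toRingEquiv.toRingHom).comp (Polynomial.toLaurent (R := ℤ))

lemma toLaurentInv_apply (p : Polynomial ℤ) :
    toLaurentInv p = LaurentPolynomial.invert (Polynomial.toLaurent p) := rfl

/-- A series whose coefficients are polynomials in `T⁻¹` has constant term its value at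
`T⁻¹ = 0`. -/
lemma ct_neg (Y : PowerSeries (Polynomial ℤ)) :
    ct (PowerSeries.map toLaurentInv Y) =
      PowerSeries.map Polynomial.constantCoeff Y := by
  ext n
  simp only [ct, PowerSeries.coeff_mk, PowerSeries.coeff_map, toLaurentInv_apply]
  rw [LaurentPolynomial.invert_apply, neg_zero, toLaurent_coeff_zero]
  rfl

/-- The number of monomials in seven variables of degree `d` and weight `m`, where the `i`-th
variable has weight `i - 3`. -/
def numMon (d : ℕ) (m : ℤ) : ℕ :=
  (((Finset.univ : Finset (Fin 7)).finsuppAntidiag d).filter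
    fun l => ∑ i : Fin 7, (l i : ℤ) * ((i : ℤ) - 3) = m).card

/-- The degrees of the four even generating invariants. -/
def genDeg : Fin 4 → ℕ := ![2, 4, 6, 10]

/-- The number of monomials of degree `d` in variables of degrees `2, 4, 6, 10`, counted through
their contributions `l i` to the degree: `l i` is a multiple of the degree of the `i`-th variable,
and these contributions add up to `d`. -/
def numGen (d : ℕ) : ℕ :=
  (((Finset.univ : Finset (Fin 4)).finsuppAntidiag d).filter
    fun l => ∀ i, genDeg i ∣ l i).card

/-- The generating series of monomials in seven variables by degree (power series variable) and
weight (`T`): the product of the geometric series of `T ^ (i - 3) t`. -/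
noncomputable def monSeries : PowerSeries ℤ[T;T⁻¹] :=
  ∏ i : Fin 7, PowerSeries.mk fun n => (T ((i : ℤ) - 3) : ℤ[T;T⁻¹]) ^ n

lemma prod_T {ι : Type*} (s : Finset ι) (f : ι → ℤ) :
    ∏ i ∈ s, (T (f i) : ℤ[T;T⁻¹]) = T (∑ i ∈ s, f i) := by
  classical
  induction s using Finset.induction_on with
  | empty => simp
  | insert a s ha ih => rw [Finset.prod_insert ha, Finset.sum_insert ha, T_add, ih]

lemma coeff_monSeries (d : ℕ) (m : ℤ) :
    (PowerSeries.coeff d monSeries).coeff m = numMon d m := by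
  rw [monSeries, PowerSeries.coeff_prod]
  simp only [PowerSeries.coeff_mk, T_pow, prod_T, AddMonoidAlgebra.coeff_sum,
    Finsupp.coe_finsetSum, Finset.sum_apply, T_apply]
  rw [Finset.sum_ite]
  simp [numMon]

lemma ct_monSeries (d : ℕ) :
    PowerSeries.coeff d (ct ((1 - PowerSeries.C (T (-1))) * monSeries)) =
      (numMon d 0 : ℤ) - numMon d 1 := by
  rw [ct, PowerSeries.coeff_mk, sub_mul, one_mul, map_sub, PowerSeries.coeff_C_mul,
    AddMonoidAlgebra.coeff_sub, Finsupp.sub_apply, coeff_monSeries]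
  congr 1
  rw [← coeff_monSeries]
  have := AddMonoidAlgebra.coeff_single_mul_apply (PowerSeries.coeff d monSeries) (1:ℤ) (-1:ℤ) 0
  rw [one_mul, neg_neg, add_zero] at this
  exact this

/-- The denominator of the partial fraction identity `cert`, up to the factor `1 - y`. -/
def certQ {R : Type*} [CommRing R] (t : R) : R :=
  1 + 2*t + t^2 - t^3 - 3*t^4 - 4*t^5 - 3*t^6 + 3*t^8 + 4*t^9 + 3*t^10 + t^11 - t^12 - 2*t^13
      - t^14

/-- The numerator over the positive-weight factors in the partial fraction identity `cert`. -/
def certA {R : Type*} [CommRing R] (z t : R) : R :=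
  (1 + t - t^3 - t^4 - t^5 + t^7 + t^8) + z^1*(-t - t^2 + t^3 + 2*t^4 + 2*t^5 + t^6 - t^8 - t^9)
      + z^2*(-t + t^3 + t^4 + t^5 + t^6 - t^8 - t^9)
      + z^3*(t^2 + t^3 - t^5 - t^6 - t^7 - t^8 + t^10)
      + z^4*(t^2 + t^3 - t^5 - 2*t^6 - 2*t^7 - t^8 + t^9 + t^10)
      + z^5*(-t^3 - t^4 + t^6 + t^7 + t^8 - t^10 - t^11)

/-- The numerator over the negative-weight factors in the partial fraction identity `cert`. It
has no constant term in `y`. -/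
def certB {R : Type*} [CommRing R] (y t : R) : R :=
  y^6*(t^3 + t^4 - t^6 - t^7 - t^8 + t^10 + t^11)
      + y^5*(-t^2 - t^3 + t^5 + 2*t^6 + 2*t^7 + t^8 - t^9 - t^10)
      + y^4*(-t^2 - t^3 + t^5 + t^6 + t^7 + t^8 - t^10)
      + y^3*(t - t^3 - t^4 - t^5 - t^6 + t^8 + t^9)
      + y^2*(t + t^2 - t^3 - 2*t^4 - 2*t^5 - t^6 + t^8 + t^9)
      + y^1*(-1 - t + t^3 + t^4 + t^5 - t^7 - t^8)

lemma map_certQ {R S : Type*} [CommRing R] [CommRing S] (φ : R →+* S) (t : R) :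
    φ (certQ t) = certQ (φ t) := by
  simp [certQ, map_ofNat φ]

lemma map_certA {R S : Type*} [CommRing R] [CommRing S] (φ : R →+* S) (z t : R) :
    φ (certA z t) = certA (φ z) (φ t) := by
  simp [certA, map_ofNat φ]

lemma map_certB {R S : Type*} [CommRing R] [CommRing S] (φ : R →+* S) (y t : R) :
    φ (certB y t) = certB (φ y) (φ t) := by
  simp [certB, map_ofNat φ]

/-- Partial fractions in `z`, with `y = z⁻¹`: after division by `∏ (1 - z ^ j t) (1 - y ^ j t)`, `j = 1, 2, 3`,
the left side splits into a part with only nonnegative powers of `z` and a part with only negative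
powers, so its constant term in `z` is read off from `certA 0 t`. -/
lemma cert {R : Type*} [CommRing R] (z y t : R) (h : z * y = 1) :
    certQ t * (1 - y) =
      certA z t * ((1 - y * t) * (1 - y ^ 2 * t) * (1 - y ^ 3 * t)) +
      certB y t * ((1 - z * t) * (1 - z ^ 2 * t) * (1 - z ^ 3 * t)) := by
  unfold certQ certA certB
  have key : ∀ p : R, z ^ 6 * p = 0 → p = 0 := fun p hp => by
    calc p = (z * y) ^ 6 * p := by rw [h]; ring
      _ = y ^ 6 * (z ^ 6 * p) := by ring
      _ = 0 := by rw [hp, mul_zero]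
  have hy (n m : ℕ) : z ^ (n + m) * y ^ m = z ^ n := by
    rw [pow_add, mul_assoc, ← mul_pow, h, one_pow, mul_one]
  have hW : z ^ 6 * ((1 - y * t) * (1 - y ^ 2 * t) * (1 - y ^ 3 * t)) =
      (z - t) * (z ^ 2 - t) * (z ^ 3 - t) := by
    have e1 : z * (1 - y * t) = z - t := by linear_combination -t * h
    have e2 : z ^ 2 * (1 - y ^ 2 * t) = z ^ 2 - t := by linear_combination -t * (hy 0 2)
    have e3 : z ^ 3 * (1 - y ^ 3 * t) = z ^ 3 - t := by linear_combination -t * (hy 0 3)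
    rw [← e1, ← e2, ← e3]; ring
  rw [← sub_eq_zero]
  -- Clearing `y` by `z ^ 6` leaves a polynomial identity in `z` and `t`.
  apply key
  linear_combination (-(1 + 2*t + t^2 - t^3 - 3*t^4 - 4*t^5 - 3*t^6 + 3*t^8 + 4*t^9 + 3*t^10
      + t^11 - t^12 - 2*t^13 - t^14)) * hy 5 1
    - ((1 + t - t^3 - t^4 - t^5 + t^7 + t^8) + z^1*(-t - t^2 + t^3 + 2*t^4 + 2*t^5 + t^6 - t^8 - t^9)
      + z^2*(-t + t^3 + t^4 + t^5 + t^6 - t^8 - t^9)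
      + z^3*(t^2 + t^3 - t^5 - t^6 - t^7 - t^8 + t^10)
      + z^4*(t^2 + t^3 - t^5 - 2*t^6 - 2*t^7 - t^8 + t^9 + t^10)
      + z^5*(-t^3 - t^4 + t^6 + t^7 + t^8 - t^10 - t^11)) * hW
    - ((t^3 + t^4 - t^6 - t^7 - t^8 + t^10 + t^11) * hy 0 6
      + (-t^2 - t^3 + t^5 + 2*t^6 + 2*t^7 + t^8 - t^9 - t^10) * hy 1 5
      + (-t^2 - t^3 + t^5 + t^6 + t^7 + t^8 - t^10) * hy 2 4
      + (t - t^3 - t^4 - t^5 - t^6 + t^8 + t^9) * hy 3 3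
      + (t + t^2 - t^3 - 2*t^4 - 2*t^5 - t^6 + t^8 + t^9) * hy 4 2
      + (-1 - t + t^3 + t^4 + t^5 - t^7 - t^8) * hy 5 1) *
      ((1 - z * t) * (1 - z ^ 2 * t) * (1 - z ^ 3 * t))

/-- The series `∑ t ^ (k n)`, as the indicator of the multiples of `k`. -/
noncomputable def dvdSeries (k : ℕ) : PowerSeries ℤ :=
  PowerSeries.mk fun n => if k ∣ n then 1 else 0

lemma dvd_mul_one_sub (k : ℕ) (hk : 0 < k) :
    dvdSeries k * (1 - PowerSeries.X ^ k) = 1 := by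
  unfold dvdSeries
  ext n
  rw [mul_sub, mul_one, map_sub, PowerSeries.coeff_mul_X_pow', PowerSeries.coeff_mk,
    PowerSeries.coeff_one]
  by_cases hn : k ≤ n
  · have h0 : n ≠ 0 := by omega
    simp [hn, h0, PowerSeries.coeff_mk, (Nat.dvd_sub_iff_left hn dvd_rfl)]
  · rcases Nat.eq_zero_or_pos n with rfl | hn0
    · simp [hk.ne']
    · have : ¬ k ∣ n := fun h => hn (Nat.le_of_dvd hn0 h)
      simp [hn, this, hn0.ne']

/-- The series `1 / ((1 - t ^ 2) (1 - t ^ 4) (1 - t ^ 6) (1 - t ^ 10))`. -/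
noncomputable def genSeries : PowerSeries ℤ :=
  ∏ i : Fin 4, dvdSeries (genDeg i)

lemma coeff_genSeries (d : ℕ) : PowerSeries.coeff d genSeries = numGen d := by
  rw [genSeries, PowerSeries.coeff_prod]
  simp only [dvdSeries, PowerSeries.coeff_mk, Finset.prod_ite_zero, Finset.prod_const_one,
    Finset.mem_univ, true_implies, numGen, Finset.card_filter]
  push_cast
  rfl

lemma genSeries_mul : genSeries * ((1 - PowerSeries.X ^ 2) * (1 - PowerSeries.X ^ 4) *
    (1 - PowerSeries.X ^ 6) * (1 - PowerSeries.X ^ 10)) = 1 := by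
  have h2 := dvd_mul_one_sub 2 (by norm_num)
  have h4 := dvd_mul_one_sub 4 (by norm_num)
  have h6 := dvd_mul_one_sub 6 (by norm_num)
  have h10 := dvd_mul_one_sub 10 (by norm_num)
  rw [genSeries, Fin.prod_univ_four]
  change dvdSeries 2 * dvdSeries 4 * dvdSeries 6 * dvdSeries 10 * _ = 1
  calc _ = dvdSeries 2 * (1 - PowerSeries.X ^ 2) *
        (dvdSeries 4 * (1 - PowerSeries.X ^ 4)) *
        (dvdSeries 6 * (1 - PowerSeries.X ^ 6)) *
        (dvdSeries 10 * (1 - PowerSeries.X ^ 10)) := by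
        ring
    _ = 1 := by rw [h2, h4, h6, h10]; ring

/-- The geometric series of `T ^ j t`. -/
noncomputable def geoT (j : ℤ) : PowerSeries ℤ[T;T⁻¹] :=
  PowerSeries.mk fun n => (T j : ℤ[T;T⁻¹]) ^ n

/-- The geometric series of `X ^ j t` over the polynomial ring in `X`. -/
noncomputable def geoX (j : ℕ) : PowerSeries (Polynomial ℤ) :=
  PowerSeries.mk fun n => (Polynomial.X ^ j : Polynomial ℤ) ^ n

lemma map_geoX (j : ℕ) : PowerSeries.map (Polynomial.toLaurent (R := ℤ)) (geoX j) = geoT j := by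
  ext1 n
  simp [geoX, geoT, PowerSeries.coeff_map]

lemma map_inv_geoX (j : ℕ) : PowerSeries.map toLaurentInv (geoX j) = geoT (-j) := by
  ext1 n
  simp [geoX, geoT, PowerSeries.coeff_map, toLaurentInv_apply]

lemma map_const_geoX (j : ℕ) (hj : j ≠ 0) :
    PowerSeries.map Polynomial.constantCoeff (geoX j) = 1 := by
  ext1 n
  rw [PowerSeries.coeff_map, geoX, PowerSeries.coeff_mk, PowerSeries.coeff_one]
  rw [← pow_mul]
  change (Polynomial.X ^ (j * n) : Polynomial ℤ).coeff 0 = _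
  rw [Polynomial.coeff_X_pow]
  simp [hj, eq_comm]

/-- The dimension count: `numMon d 0 - numMon d 1` is the `d`-th coefficient of
`(1 + t ^ 15) / ((1 - t ^ 2) (1 - t ^ 4) (1 - t ^ 6) (1 - t ^ 10))`. -/
theorem numMon_sub (d : ℕ) : (numMon d 0 : ℤ) - numMon d 1 =
    numGen d + if 15 ≤ d then (numGen (d - 15) : ℤ) else 0 := by
  set H := ct ((1 - PowerSeries.C (T (-1))) * monSeries) with hH
  set z : PowerSeries ℤ[T;T⁻¹] := PowerSeries.C (T 1) with hz
  set y : PowerSeries ℤ[T;T⁻¹] := PowerSeries.C (T (-1)) with hy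
  set t : PowerSeries ℤ := PowerSeries.X with ht
  have hzy : z * y = 1 := by rw [hz, hy, ← map_mul, ← T_add]; simp
  have hzj (j : ℕ) : PowerSeries.C (T (j : ℤ) : ℤ[T;T⁻¹]) = z ^ j := by
    rw [hz, ← map_pow, T_pow, mul_one]
  have hyj (j : ℕ) : PowerSeries.C (T (-(j : ℤ)) : ℤ[T;T⁻¹]) = y ^ j := by
    rw [hy, ← map_pow, T_pow, mul_neg, mul_one]
  have gp (j : ℕ) : geoT j * (1 - z ^ j * PowerSeries.X) = 1 := by
    rw [← hzj]; exact geo_mul _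
  have gm (j : ℕ) : geoT (-j) * (1 - y ^ j * PowerSeries.X) = 1 := by
    rw [← hyj]; exact geo_mul _
  have hG : monSeries = geoT (-(3 : ℕ)) * geoT (-(2 : ℕ)) * geoT (-(1 : ℕ)) * geoT (0 : ℕ) *
      geoT (1 : ℕ) * geoT (2 : ℕ) * geoT (3 : ℕ) := by
    rw [monSeries, Fin.prod_univ_seven]; rfl
  have hcert := cert z y PowerSeries.X hzy
  -- Multiplying by the pure `t`-series `certQ t * (1 - t)` splits the generating function of
  -- weight differences into a part polynomial in `T` and a part polynomial in `T⁻¹`.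
  have hmain : PowerSeries.map LaurentPolynomial.C (certQ t * (1 - t)) * ((1 - y) * monSeries) =
      PowerSeries.map (Polynomial.toLaurent (R := ℤ))
        (certA (PowerSeries.C Polynomial.X) PowerSeries.X * (geoX 1 * geoX 2 * geoX 3)) +
      PowerSeries.map toLaurentInv
        (certB (PowerSeries.C Polynomial.X) PowerSeries.X * (geoX 1 * geoX 2 * geoX 3)) := by
    have e : toLaurentInv Polynomial.X = T (-1) := by simp [toLaurentInv_apply]
    simp only [map_mul, map_sub, map_one, map_certQ, map_certA, map_certB, map_geoX, map_inv_geoX,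
      PowerSeries.map_X, PowerSeries.map_C, ht, e, Polynomial.toLaurent_X, ← hz, ← hy]
    have g0 := gp 0
    rw [pow_zero, one_mul] at g0
    have p1 := gp 1
    have p2 := gp 2
    have p3 := gp 3
    have m1 := gm 1
    have m2 := gm 2
    have m3 := gm 3
    rw [pow_one] at p1 m1
    have hp : geoT (1 : ℕ) * geoT (2 : ℕ) * geoT (3 : ℕ) * ((1 - z * PowerSeries.X) *
        (1 - z ^ 2 * PowerSeries.X) * (1 - z ^ 3 * PowerSeries.X)) = 1 := by
      calc _ = (geoT (1 : ℕ) * (1 - z * PowerSeries.X)) *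
            (geoT (2 : ℕ) * (1 - z ^ 2 * PowerSeries.X)) *
            (geoT (3 : ℕ) * (1 - z ^ 3 * PowerSeries.X)) := by ring
        _ = 1 := by rw [p1, p2, p3]; ring
    have hm : geoT (-(1 : ℕ)) * geoT (-(2 : ℕ)) * geoT (-(3 : ℕ)) * ((1 - y * PowerSeries.X) *
        (1 - y ^ 2 * PowerSeries.X) * (1 - y ^ 3 * PowerSeries.X)) = 1 := by
      calc _ = (geoT (-(1 : ℕ)) * (1 - y * PowerSeries.X)) *
            (geoT (-(2 : ℕ)) * (1 - y ^ 2 * PowerSeries.X)) *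
            (geoT (-(3 : ℕ)) * (1 - y ^ 3 * PowerSeries.X)) := by ring
        _ = 1 := by rw [m1, m2, m3]; ring
    rw [hG]
    simp only [Nat.cast_one, Nat.cast_ofNat, Nat.cast_zero] at *
    calc _ = certQ PowerSeries.X * (1 - y) * (geoT 1 * geoT 2 * geoT 3) *
          (geoT (-1) * geoT (-2) * geoT (-3)) * (geoT 0 * (1 - PowerSeries.X)) := by ring
      _ = certA z PowerSeries.X * (geoT 1 * geoT 2 * geoT 3) *
            (geoT (-1) * geoT (-2) * geoT (-3) * ((1 - y * PowerSeries.X) *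
              (1 - y ^ 2 * PowerSeries.X) * (1 - y ^ 3 * PowerSeries.X))) +
          certB y PowerSeries.X * (geoT (-1) * geoT (-2) * geoT (-3)) *
            (geoT 1 * geoT 2 * geoT 3 * ((1 - z * PowerSeries.X) *
              (1 - z ^ 2 * PowerSeries.X) * (1 - z ^ 3 * PowerSeries.X))) := by
          rw [g0, hcert]; ring
      _ = _ := by rw [hp, hm]; ring
  have hHQ : certQ t * (1 - t) * H = 1 + t - t^3 - t^4 - t^5 + t^7 + t^8 := by
    rw [hH, ← ct_map_mul, hmain, ct_add, ct_pos, ct_neg]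
    simp [certA, certB, map_const_geoX, ht]
  have hQ : certQ t * (1 - t) ≠ 0 := by
    intro h
    have := congrArg (PowerSeries.constantCoeff) h
    simp [certQ, ht] at this
  have hHD : H * ((1 - t ^ 2) * (1 - t ^ 4) * (1 - t ^ 6) * (1 - t ^ 10)) = 1 + t ^ 15 := by
    apply mul_left_cancel₀ hQ
    rw [← mul_assoc, hHQ]
    simp only [certQ]
    ring
  have hfin : H = genSeries + genSeries * t ^ 15 := by
    calc H = H * (genSeries * ((1 - t ^ 2) * (1 - t ^ 4) * (1 - t ^ 6) * (1 - t ^ 10))) := by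
          rw [ht, genSeries_mul, mul_one]
      _ = genSeries * (H * ((1 - t ^ 2) * (1 - t ^ 4) * (1 - t ^ 6) * (1 - t ^ 10))) := by ring
      _ = _ := by rw [hHD]; ring
  rw [← ct_monSeries, ← hH, hfin, map_add, coeff_genSeries, ht, PowerSeries.coeff_mul_X_pow']
  split_ifs <;> simp [coeff_genSeries]
end Counting

/-! ### The action of `𝔰𝔩₂` on polynomials in the coefficients -/

section Sl2

/-- The bigrading of the coefficient variables by degree and torus weight, the `i`-th variable
having degree `1` and weight `i - 3`. -/
def wt : Fin 7 → ℤ × ℤ := fun i => (1, (i : ℤ) - 3)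

lemma weight_wt (l : Fin 7 →₀ ℕ) :
    Finsupp.weight wt l = ((∑ i, (l i : ℤ)), ∑ i, (l i : ℤ) * ((i : ℤ) - 3)) := by
  rw [Finsupp.weight_apply, Finsupp.sum_fintype _ _ (by simp)]
  ext <;> simp [wt, Prod.fst_sum, Prod.snd_sum]

variable {k : Type*} [Field k]

variable (k) in
/-- The polynomials of degree `d` and weight `m`. -/
abbrev wtSpace (d m : ℤ) : Submodule k (MvPolynomial (Fin 7) k) :=
  weightedHomogeneousSubmodule k wt (d, m)

lemma wt_set_eq (d : ℕ) (m : ℤ) : {l : Fin 7 →₀ ℕ | Finsupp.weight wt l = ((d : ℤ), m)} =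
    (((Finset.univ : Finset (Fin 7)).finsuppAntidiag d).filter
    fun l => ∑ i : Fin 7, (l i : ℤ) * ((i : ℤ) - 3) = m : Finset (Fin 7 →₀ ℕ)) := by
  ext l
  simp only [weight_wt, Set.mem_ofPred_eq, Prod.mk.injEq, Finset.coe_filter,
    Finset.mem_finsuppAntidiag, Finset.subset_univ, and_true]
  norm_cast

/-- The monomials of degree `d` and weight `m` form a basis of `wtSpace k d m`. -/
noncomputable def wtSpaceEquiv (d : ℕ) (m : ℤ) : wtSpace k d m ≃ₗ[k]
    ((((Finset.univ : Finset (Fin 7)).finsuppAntidiag d).filter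
      fun l => ∑ i : Fin 7, (l i : ℤ) * ((i : ℤ) - 3) = m : Finset (Fin 7 →₀ ℕ)) →₀ k) :=
  (LinearEquiv.ofEq _ _ (by
    rw [wtSpace, weightedHomogeneousSubmodule_eq_finsupp_supported, wt_set_eq])).trans
    (AddMonoidAlgebra.supportedEquivFinsupp (R := k) (S := k) (SetLike.coe _))

instance (d : ℕ) (m : ℤ) : Module.Finite k (wtSpace k d m) :=
  Module.Finite.equiv (wtSpaceEquiv d m).symm

lemma finrank_wtSpace (d : ℕ) (m : ℤ) : Module.finrank k (wtSpace k d m) = numMon d m := by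
  rw [(wtSpaceEquiv d m).finrank_eq, Module.finrank_finsupp_self, numMon, Fintype.card_coe]

/-- Each variable has weight at most `3`, so weights in degree `d` are at most `3 d`. -/
lemma wtSpace_eq_bot {d m : ℤ} (h : 3 * d < m) : wtSpace k d m = ⊥ := by
  rw [eq_bot_iff]
  intro P hP
  rw [Submodule.mem_bot]
  refine IsWeightedHomogeneous.eq_zero_of_no_monomials hP fun l hl => ?_
  rw [weight_wt, Prod.mk.injEq] at hl
  obtain ⟨h1, h2⟩ := hl
  rw [← h1, ← h2, Finset.mul_sum] at h
  refine absurd h (not_lt.2 (Finset.sum_le_sum fun i _ => ?_))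
  rw [mul_comm]
  exact mul_le_mul_of_nonneg_right (by have := i.2; omega) (by positivity)

/-- A derivation shifting the bidegree of every variable by `s` shifts all bidegrees by `s`. -/
lemma derivation_mem (D : Derivation k (MvPolynomial (Fin 7) k) (MvPolynomial (Fin 7) k))
    {s : ℤ × ℤ} (hD : ∀ i, IsWeightedHomogeneous wt (D (X i)) (wt i + s)) {n : ℤ × ℤ}
    {P : MvPolynomial (Fin 7) k} (hP : IsWeightedHomogeneous wt P n) :
    IsWeightedHomogeneous wt (D P) (n + s) := by
  have hDD : D = mkDerivation k fun i => D (X i) := derivation_ext fun i => by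
    rw [mkDerivation_X]
  induction hP using IsWeightedHomogeneous.induction_on with
  | zero => rw [map_zero]; exact isWeightedHomogeneous_zero _ _ _
  | add p q hp hq h1 h2 => rw [map_add]; exact h1.add h2
  | monomial l r hr =>
    rw [hDD, mkDerivation_monomial, smul_eq_C_mul]
    refine IsWeightedHomogeneous.C_mul (IsWeightedHomogeneous.sum _ _ _ fun i hi => ?_) _
    simp only [smul_eq_mul]
    have h := (isWeightedHomogeneous_monomial wt (l - Finsupp.single i 1) ((l i : k)) rfl).mul
      (hD i)
    convert h using 1
    have hl : l = (l - Finsupp.single i 1) + Finsupp.single i 1 := by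
      rw [tsub_add_cancel_of_le]
      rw [Finsupp.single_le_iff]
      exact Nat.one_le_iff_ne_zero.2 (Finsupp.mem_support_iff.1 hi)
    rw [← hr, ← add_assoc]
    conv_lhs => rw [hl]
    rw [map_add, Finsupp.weight_single, one_smul]

variable (k) in
/-- The raising operator of `𝔰𝔩₂`: the derivative at `t = 0` of the substitution `y ↦ y + t x`,
acting on the coefficients of the sextic. -/
noncomputable def raise : Derivation k (MvPolynomial (Fin 7) k) (MvPolynomial (Fin 7) k) :=
  mkDerivation k ![6 • X 1, 5 • X 2, 4 • X 3, 3 • X 4, 2 • X 5, X 6, 0]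

variable (k) in
/-- The lowering operator of `𝔰𝔩₂`, the infinitesimal form of the substitution `x ↦ x + t y`. -/
noncomputable def lower : Derivation k (MvPolynomial (Fin 7) k) (MvPolynomial (Fin 7) k) :=
  mkDerivation k ![0, X 0, 2 • X 1, 3 • X 2, 4 • X 3, 5 • X 4, 6 • X 5]

variable (k) in
/-- The Cartan operator of `𝔰𝔩₂`, acting as `2 m` on polynomials of weight `m`. -/
noncomputable def cartan : Derivation k (MvPolynomial (Fin 7) k) (MvPolynomial (Fin 7) k) :=
  mkDerivation k fun i => (2 * ((i : ℤ) - 3)) • X i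

lemma isWH_nsmul_X (c : ℕ) (i : Fin 7) {n : ℤ × ℤ} (h : wt i = n) :
    IsWeightedHomogeneous wt (c • (X i : MvPolynomial (Fin 7) k)) n := by
  rw [nsmul_eq_mul, ← map_natCast (C : k →+* _), ← h]
  exact (isWeightedHomogeneous_X _ _ _).C_mul _

lemma raise_mem {d m : ℤ} {P : MvPolynomial (Fin 7) k} (hP : P ∈ wtSpace k d m) :
    raise k P ∈ wtSpace k d (m + 1) := by
  have h := derivation_mem (raise k) (s := (0, 1)) (fun i => ?_) hP
  · simpa using h
  · rw [raise, mkDerivation_X]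
    fin_cases i
    · exact isWH_nsmul_X _ _ rfl
    · exact isWH_nsmul_X _ _ rfl
    · exact isWH_nsmul_X _ _ rfl
    · exact isWH_nsmul_X _ _ rfl
    · exact isWH_nsmul_X _ _ rfl
    · exact isWeightedHomogeneous_X _ _ _
    · exact isWeightedHomogeneous_zero _ _ _

lemma lower_mem {d m : ℤ} {P : MvPolynomial (Fin 7) k} (hP : P ∈ wtSpace k d m) :
    lower k P ∈ wtSpace k d (m - 1) := by
  have h := derivation_mem (lower k) (s := (0, -1)) (fun i => ?_) hP
  · simpa [sub_eq_add_neg] using h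
  · rw [lower, mkDerivation_X]
    fin_cases i
    · exact isWeightedHomogeneous_zero _ _ _
    · exact isWeightedHomogeneous_X _ _ _
    · exact isWH_nsmul_X _ _ rfl
    · exact isWH_nsmul_X _ _ rfl
    · exact isWH_nsmul_X _ _ rfl
    · exact isWH_nsmul_X _ _ rfl
    · exact isWH_nsmul_X _ _ rfl

lemma cartan_eq {d m : ℤ} {P : MvPolynomial (Fin 7) k} (hP : P ∈ wtSpace k d m) :
    cartan k P = (2 * m) • P := by
  change IsWeightedHomogeneous wt P (d, m) at hP
  induction hP using IsWeightedHomogeneous.induction_on with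
  | zero => simp
  | add p q hp hq h1 h2 => rw [map_add, h1, h2, smul_add]
  | monomial l r hr =>
    rw [cartan, mkDerivation_monomial]
    have hm : m = ∑ i, (l i : ℤ) * ((i : ℤ) - 3) := by
      rw [weight_wt, Prod.mk.injEq] at hr; exact hr.2.symm
    have h1 : ∀ i, (monomial (l - Finsupp.single i 1) (l i : k)) •
        ((2 * ((i : ℤ) - 3)) • (X i : MvPolynomial (Fin 7) k)) =
        (2 * ((l i : ℤ) * ((i : ℤ) - 3))) • monomial l (1 : k) := by
      intro i
      rcases Nat.eq_zero_or_pos (l i) with h0 | h0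
      · simp [h0]
      · have hl : (l - Finsupp.single i 1) + Finsupp.single i 1 = l := by
          rw [tsub_add_cancel_of_le]
          rwa [Finsupp.single_le_iff]
        rw [smul_eq_mul, mul_smul_comm, X, monomial_mul, hl, mul_one]
        rw [show (monomial l (l i : k)) = (l i : ℤ) • monomial l (1 : k) by
          rw [← map_zsmul]; simp]
        rw [smul_smul]; congr 1; ring
    rw [Finsupp.sum_fintype _ _ (by simp)]
    simp only [h1]
    rw [← Finset.sum_smul, ← Finset.mul_sum, ← hm, smul_comm, ← map_smul]
    simp

lemma raise_lower (P : MvPolynomial (Fin 7) k) :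
    raise k (lower k P) - lower k (raise k P) = cartan k P := by
  have : ⁅raise k, lower k⁆ = cartan k := by
    refine derivation_ext fun i => ?_
    rw [Derivation.commutator_apply]
    have hn : ∀ (D : Derivation k (MvPolynomial (Fin 7) k) (MvPolynomial (Fin 7) k)) (n : ℕ)
        [n.AtLeastTwo], D (OfNat.ofNat n) = 0 := fun D n _ => D.map_natCast n
    fin_cases i <;> simp [raise, lower, cartan, mkDerivation_X, hn] <;> ring
  rw [← this, Derivation.commutator_apply]

variable [CharZero k]

/-- On weight `1` the operator `raise ∘ lower` is injective: if `v` is in its kernel, the commutation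
relation shows that `lower (raiseⁿ⁺¹ v)` is a nonzero multiple of `raiseⁿ v` for all `n`, while
`raiseⁿ v = 0` for large `n`; descending gives `v = 0`. -/
lemma raise_lower_injective {d : ℤ} {v : MvPolynomial (Fin 7) k} (hv : v ∈ wtSpace k d 1)
    (h : raise k (lower k v) = 0) : v = 0 := by
  have mem : ∀ n : ℕ, (raise k)^[n] v ∈ wtSpace k d (n + 1) := by
    intro n
    induction n with
    | zero => simpa using hv
    | succ n ih =>
      rw [Function.iterate_succ_apply']
      have := raise_mem ih
      push_cast; exact this
  have key : ∀ n : ℕ, lower k ((raise k)^[n + 1] v) =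
      (-((n + 1) * (n + 2) : ℤ)) • (raise k)^[n] v := by
    intro n
    induction n with
    | zero =>
      have := raise_lower v
      rw [h, zero_sub, cartan_eq hv] at this
      simp only [zero_add, Function.iterate_one, Function.iterate_zero, id]
      rw [neg_eq_iff_eq_neg.1 this, ← neg_smul]; simp
    | succ n ih =>
      have := raise_lower ((raise k)^[n + 1] v)
      rw [ih, cartan_eq (mem _), map_zsmul, ← Function.iterate_succ_apply' (raise k) n,
        ← Function.iterate_succ_apply' (raise k) (n+1)] at this
      rw [← sub_eq_iff_eq_add'.2 (sub_eq_iff_eq_add.1 this), ← sub_smul]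
      congr 1
      grind
  have down : ∀ n : ℕ, (raise k)^[n] v = 0 → v = 0 := by
    intro n
    induction n with
    | zero => exact id
    | succ n ih =>
      intro h0
      apply ih
      have := key n
      rw [h0, map_zero, eq_comm, ← Int.cast_smul_eq_zsmul k, smul_eq_zero] at this
      refine this.resolve_left ?_
      norm_cast
  refine down (3 * d).toNat ?_
  have := mem (3 * d).toNat
  rw [wtSpace_eq_bot (by omega), Submodule.mem_bot] at this
  exact this

/-- The polynomials of degree `d` and weight `0` killed by `raise`. -/
noncomputable def hwSpace (k : Type*) [Field k] (d : ℤ) :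
    Submodule k (MvPolynomial (Fin 7) k) :=
  wtSpace k d 0 ⊓ LinearMap.ker (raise k : MvPolynomial (Fin 7) k →ₗ[k] MvPolynomial (Fin 7) k)

/-- Since `raise` maps weight `0` onto weight `1`, the dimension of its kernel is a difference of
numbers of monomials. -/
theorem finrank_hwSpace (d : ℕ) :
    (Module.finrank k (hwSpace k d) : ℤ) = numMon d 0 - numMon d 1 := by
  let e : wtSpace k d 0 →ₗ[k] wtSpace k d 1 :=
    (raise k : MvPolynomial (Fin 7) k →ₗ[k] MvPolynomial (Fin 7) k).restrict
      fun P hP => by simpa using raise_mem hP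
  let f : wtSpace k d 1 →ₗ[k] wtSpace k d 0 :=
    (lower k : MvPolynomial (Fin 7) k →ₗ[k] MvPolynomial (Fin 7) k).restrict
      fun P hP => by simpa using lower_mem hP
  have hinj : Function.Injective (e ∘ₗ f) := by
    rw [← LinearMap.ker_eq_bot, LinearMap.ker_eq_bot']
    intro v hv
    have := congrArg Subtype.val hv
    exact Subtype.ext (raise_lower_injective v.2 this)
  have hsurj : Function.Surjective e := by
    have := LinearMap.surjective_of_injective hinj
    rw [LinearMap.coe_comp] at this
    exact this.of_comp
  have h1 := e.finrank_range_add_finrank_ker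
  rw [LinearMap.range_eq_top.2 hsurj, finrank_top, finrank_wtSpace, finrank_wtSpace] at h1
  have h2 : Module.finrank k (hwSpace k d) = Module.finrank k (LinearMap.ker e) := by
    have : LinearMap.ker e = Submodule.comap (wtSpace k d 0).subtype
        (LinearMap.ker (raise k : MvPolynomial (Fin 7) k →ₗ[k] MvPolynomial (Fin 7) k)) := by
      ext P
      simp [e, LinearMap.mem_ker, Subtype.ext_iff]
    rw [this, hwSpace]
    rw [← Submodule.map_comap_subtype, Submodule.finrank_map_subtype_eq]
  rw [h2]
  omega

end Sl2

/-! ### Covariants of the sextic -/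

section Invariants

variable {R S : Type*} [CommRing R] [CommRing S]

/-- The coefficient vector of `F(p x + r y, q x + s y)` for the sextic `F` with binomially
normalised coefficient vector `v`. -/
def act6 (p q r s : R) (v : Fin 7 → R) : Fin 7 → R :=
  ![p^6 * v 0 + 6 * p^5 * q * v 1 + 15 * p^4 * q^2 * v 2 + 20 * p^3 * q^3 * v 3 + 15 * p^2 * q^4
      * v 4 + 6 * p * q^5 * v 5 + q^6 * v 6,
    p^5 * r * v 0 + (p^5 * s + 5 * p^4 * q * r) * v 1 + (5 * p^4 * q * s + 10 * p^3 * q^2 * r) *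
      v 2 + (10 * p^3 * q^2 * s + 10 * p^2 * q^3 * r) * v 3 + (10 * p^2 * q^3 * s + 5 * p *
      q^4 * r) * v 4 + (5 * p * q^4 * s + q^5 * r) * v 5 + q^5 * s * v 6,
    p^4 * r^2 * v 0 + (2 * p^4 * r * s + 4 * p^3 * q * r^2) * v 1 + (p^4 * s^2 + 8 * p^3 * q * r
      * s + 6 * p^2 * q^2 * r^2) * v 2 + (4 * p^3 * q * s^2 + 12 * p^2 * q^2 * r * s + 4 * p
      * q^3 * r^2) * v 3 + (6 * p^2 * q^2 * s^2 + 8 * p * q^3 * r * s + q^4 * r^2) * v 4 +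
      (4 * p * q^3 * s^2 + 2 * q^4 * r * s) * v 5 + q^4 * s^2 * v 6,
    p^3 * r^3 * v 0 + (3 * p^3 * r^2 * s + 3 * p^2 * q * r^3) * v 1 + (3 * p^3 * r * s^2 + 9 *
      p^2 * q * r^2 * s + 3 * p * q^2 * r^3) * v 2 + (p^3 * s^3 + 9 * p^2 * q * r * s^2 + 9
      * p * q^2 * r^2 * s + q^3 * r^3) * v 3 + (3 * p^2 * q * s^3 + 9 * p * q^2 * r * s^2 +
      3 * q^3 * r^2 * s) * v 4 + (3 * p * q^2 * s^3 + 3 * q^3 * r * s^2) * v 5 + q^3 * s^3 *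
      v 6,
    p^2 * r^4 * v 0 + (4 * p^2 * r^3 * s + 2 * p * q * r^4) * v 1 + (6 * p^2 * r^2 * s^2 + 8 * p
      * q * r^3 * s + q^2 * r^4) * v 2 + (4 * p^2 * r * s^3 + 12 * p * q * r^2 * s^2 + 4 *
      q^2 * r^3 * s) * v 3 + (p^2 * s^4 + 8 * p * q * r * s^3 + 6 * q^2 * r^2 * s^2) * v 4 +
      (2 * p * q * s^4 + 4 * q^2 * r * s^3) * v 5 + q^2 * s^4 * v 6,
    p * r^5 * v 0 + (5 * p * r^4 * s + q * r^5) * v 1 + (10 * p * r^3 * s^2 + 5 * q * r^4 * s) *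
      v 2 + (10 * p * r^2 * s^3 + 10 * q * r^3 * s^2) * v 3 + (5 * p * r * s^4 + 10 * q *
      r^2 * s^3) * v 4 + (p * s^5 + 5 * q * r * s^4) * v 5 + q * s^5 * v 6,
    r^6 * v 0 + 6 * r^5 * s * v 1 + 15 * r^4 * s^2 * v 2 + 20 * r^3 * s^3 * v 3 + 15 * r^2 * s^4
      * v 4 + 6 * r * s^5 * v 5 + s^6 * v 6]

/-- The same substitution on quartics `∑ (4 choose i) vᵢ x ^ (4 - i) y ^ i`. -/
def act4 (p q r s : R) (v : Fin 5 → R) : Fin 5 → R :=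
  ![p^4 * v 0 + 4 * p^3 * q * v 1 + 6 * p^2 * q^2 * v 2 + 4 * p * q^3 * v 3 + q^4 * v 4,
    p^3 * r * v 0 + (p^3 * s + 3 * p^2 * q * r) * v 1 + (3 * p^2 * q * s + 3 * p * q^2 * r) * v
      2 + (3 * p * q^2 * s + q^3 * r) * v 3 + q^3 * s * v 4,
    p^2 * r^2 * v 0 + (2 * p^2 * r * s + 2 * p * q * r^2) * v 1 + (p^2 * s^2 + 4 * p * q * r * s
      + q^2 * r^2) * v 2 + (2 * p * q * s^2 + 2 * q^2 * r * s) * v 3 + q^2 * s^2 * v 4,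
    p * r^3 * v 0 + (3 * p * r^2 * s + q * r^3) * v 1 + (3 * p * r * s^2 + 3 * q * r^2 * s) * v
      2 + (p * s^3 + 3 * q * r * s^2) * v 3 + q * s^3 * v 4,
    r^4 * v 0 + 4 * r^3 * s * v 1 + 6 * r^2 * s^2 * v 2 + 4 * r * s^3 * v 3 + s^4 * v 4]

/-- The same substitution on quadratic forms `v₀ x ^ 2 + 2 v₁ x y + v₂ y ^ 2`. -/
def act2 (p q r s : R) (v : Fin 3 → R) : Fin 3 → R :=
  ![p^2 * v 0 + 2 * p * q * v 1 + q^2 * v 2,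
    p * r * v 0 + (p * s + q * r) * v 1 + q * s * v 2,
    r^2 * v 0 + 2 * r * s * v 1 + s^2 * v 2]

/-- The fourth transvectant of the sextic with itself, a quartic covariant of degree `2`, scaled
to have integral normalised coefficients. -/
def quartic (v : Fin 7 → R) : Fin 5 → R :=
  ![6 * (v 0 * v 4 - 4 * v 1 * v 3 + 3 * v 2 ^ 2),
    3 * (v 0 * v 5 - 3 * v 1 * v 4 + 2 * v 2 * v 3),
    v 0 * v 6 - 9 * v 2 * v 4 + 8 * v 3 ^ 2,
    3 * (v 1 * v 6 - 3 * v 2 * v 5 + 2 * v 3 * v 4),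
    6 * (v 2 * v 6 - 4 * v 3 * v 5 + 3 * v 4 ^ 2)]

/-- The fourth transvectant of a sextic and a quartic, a quadratic form. -/
def contract64 (v : Fin 7 → R) (u : Fin 5 → R) : Fin 3 → R :=
  ![v 0 * u 4 - 4 * v 1 * u 3 + 6 * v 2 * u 2 - 4 * v 3 * u 1 + v 4 * u 0,
    v 1 * u 4 - 4 * v 2 * u 3 + 6 * v 3 * u 2 - 4 * v 4 * u 1 + v 5 * u 0,
    v 2 * u 4 - 4 * v 3 * u 3 + 6 * v 4 * u 2 - 4 * v 5 * u 1 + v 6 * u 0]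

/-- The second transvectant of a quartic and a quadratic form, a quadratic form. -/
def contract42 (u : Fin 5 → R) (l : Fin 3 → R) : Fin 3 → R :=
  ![u 0 * l 2 - 2 * u 1 * l 1 + u 2 * l 0,
    u 1 * l 2 - 2 * u 2 * l 1 + u 3 * l 0,
    u 2 * l 2 - 2 * u 3 * l 1 + u 4 * l 0]

/-- A quadratic covariant of degree `3`. -/
def quadL (v : Fin 7 → R) : Fin 3 → R := contract64 v (quartic v)

/-- A quadratic covariant of degree `5`. -/
def quadM (v : Fin 7 → R) : Fin 3 → R := contract42 (quartic v) (quadL v)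

/-- A quadratic covariant of degree `7`. -/
def quadN (v : Fin 7 → R) : Fin 3 → R := contract42 (quartic v) (quadM v)

/-- The invariant of degree `2` of the sextic: its sixth transvectant with itself. -/
def invA (v : Fin 7 → R) : R := v 0 * v 6 - 6 * v 1 * v 5 + 15 * v 2 * v 4 - 10 * v 3 ^ 2

/-- The invariant `I` of degree `2` of a quartic. -/
def quarticI (u : Fin 5 → R) : R := u 0 * u 4 - 4 * u 1 * u 3 + 3 * u 2 ^ 2

/-- The invariant `J` of degree `3` of a quartic. -/
def quarticJ (u : Fin 5 → R) : R :=
  u 0 * u 2 * u 4 + 2 * u 1 * u 2 * u 3 - u 0 * u 3 ^ 2 - u 4 * u 1 ^ 2 - u 2 ^ 3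

/-- The second transvectant of a quadratic form with itself, proportional to its discriminant. -/
def discr2 (m : Fin 3 → R) : R := 2 * (m 0 * m 2 - m 1 ^ 2)

/-- The determinant of the coefficient vectors of three quadratic forms. -/
def det3 (l m n : Fin 3 → R) : R :=
  l 0 * (m 1 * n 2 - m 2 * n 1) - l 1 * (m 0 * n 2 - m 2 * n 0) + l 2 * (m 0 * n 1 - m 1 * n 0)

/-- The invariant of degree `4`. -/
def invB (v : Fin 7 → R) : R := quarticI (quartic v)

/-- The invariant of degree `6`. -/
def invC (v : Fin 7 → R) : R := quarticJ (quartic v)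

/-- The invariant of degree `10`. -/
def invD (v : Fin 7 → R) : R := discr2 (quadM v)

/-- The invariant of degree `15`: the determinant of the three quadratic covariants. -/
def invE (v : Fin 7 → R) : R := det3 (quadL v) (quadM v) (quadN v)

lemma quartic_act (p q r s : R) (v : Fin 7 → R) :
    quartic (act6 p q r s v) = (p * s - q * r) ^ 4 • act4 p q r s (quartic v) := by
  funext i
  fin_cases i <;> simp [quartic, act6, act4] <;> ring

lemma contract64_act (p q r s : R) (v : Fin 7 → R) (u : Fin 5 → R) :
    contract64 (act6 p q r s v) (act4 p q r s u) =
      (p * s - q * r) ^ 4 • act2 p q r s (contract64 v u) := by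
  funext i
  fin_cases i <;> simp [contract64, act6, act4, act2] <;> ring

lemma contract42_act (p q r s : R) (u : Fin 5 → R) (l : Fin 3 → R) :
    contract42 (act4 p q r s u) (act2 p q r s l) =
      (p * s - q * r) ^ 2 • act2 p q r s (contract42 u l) := by
  funext i
  fin_cases i <;> simp [contract42, act4, act2] <;> ring

lemma invA_act (p q r s : R) (v : Fin 7 → R) :
    invA (act6 p q r s v) = (p * s - q * r) ^ 6 * invA v := by
  simp [invA, act6]; ring

lemma quarticI_act (p q r s : R) (u : Fin 5 → R) :
    quarticI (act4 p q r s u) = (p * s - q * r) ^ 4 * quarticI u := by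
  simp [quarticI, act4]; ring

lemma quarticJ_act (p q r s : R) (u : Fin 5 → R) :
    quarticJ (act4 p q r s u) = (p * s - q * r) ^ 6 * quarticJ u := by
  simp [quarticJ, act4]; ring

lemma discr2_act (p q r s : R) (m : Fin 3 → R) :
    discr2 (act2 p q r s m) = (p * s - q * r) ^ 2 * discr2 m := by
  simp [discr2, act2]; ring

lemma det3_act (p q r s : R) (l m n : Fin 3 → R) :
    det3 (act2 p q r s l) (act2 p q r s m) (act2 p q r s n) =
      (p * s - q * r) ^ 3 * det3 l m n := by
  simp [det3, act2]; ring

end Invariants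

/-! ### Invariance and homogeneity -/

section Invariance

variable {k : Type*} [Field k]

lemma eval_sextic (v : Fin 7 → k) (x : Fin 2 → k) :
    eval x (sextic v) = v 0 * x 0 ^ 6 + 6 * v 1 * x 0 ^ 5 * x 1 + 15 * v 2 * x 0 ^ 4 * x 1 ^ 2 +
      20 * v 3 * x 0 ^ 3 * x 1 ^ 3 + 15 * v 4 * x 0 ^ 2 * x 1 ^ 4 + 6 * v 5 * x 0 * x 1 ^ 5 +
      v 6 * x 1 ^ 6 := by
  simp [sextic]

lemma eval_substAct (M : Matrix (Fin 2) (Fin 2) k) (F : MvPolynomial (Fin 2) k) (x : Fin 2 → k) :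
    eval x (substAct M F) = eval (fun i => M 0 i * x 0 + M 1 i * x 1) F := by
  rw [substAct, aeval_def, ← eval₂_id, ← eval₂_id]
  induction F using MvPolynomial.induction_on with
  | C a => simp
  | add p q hp hq => simp only [eval₂_add, hp, hq]
  | mul_X p i hp => simp only [eval₂_mul, hp, eval₂_X]; simp

variable [CharZero k]

lemma sextic_act6 (M : Matrix (Fin 2) (Fin 2) k) (v : Fin 7 → k) :
    sextic (act6 (M 0 0) (M 0 1) (M 1 0) (M 1 1) v) = substAct M (sextic v) := by
  refine MvPolynomial.funext fun x => ?_
  simp only [eval_substAct, eval_sextic, act6]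
  simp
  ring

/-- A sextic is determined by its values at the seven points used here; the coefficients in the
linear combinations are those of the inverse of the evaluation matrix. -/
lemma sextic_injective : Function.Injective (sextic : (Fin 7 → k) → MvPolynomial (Fin 2) k) := by
  intro v w hvw
  have h (x y : k) := congrArg (eval ![x, y]) hvw
  simp only [eval_sextic, Matrix.cons_val_zero, Matrix.cons_val_one] at h
  have h0 := h 1 0
  have h1 := h 0 1
  have h2 := h 1 1
  have h3 := h 1 (-1)
  have h4 := h 1 2
  have h5 := h 1 (-2)
  have h6 := h 1 3
  funext j
  fin_cases j <;> simp only [Fin.zero_eta, Fin.mk_one, Fin.reduceFinMk]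
  · linear_combination 1 * h0
  · linear_combination (-1/18) * h0 + (-2) * h1 + (1/6) * h2 + (-1/12) * h3 +
      (-1/24) * h4 + (1/120) * h5 + (1/180) * h6
  · linear_combination (-1/12) * h0 + (4/15) * h1 + (2/45) * h2 + (2/45) * h3 + (-1/360) * h4 + (-1/360) * h5
  · linear_combination (1/48) * h0 + (3/4) * h1 + (-7/240) * h2 + (-1/480) * h3 +
      (7/480) * h4 + (-1/480) * h5 + (-1/480) * h6
  · linear_combination (1/60) * h0 + (-1/3) * h1 + (-1/90) * h2 + (-1/90) * h3 + (1/360) * h4 + (1/360) * h5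
  · linear_combination (-1/72) * h0 + (-1/2) * h1 + (1/72) * h2 + (1/144) * h3 +
      (-1/144) * h4 + (-1/720) * h5 + (1/720) * h6
  · linear_combination 1 * h1

lemma isSL2Invariant_of_act {P : MvPolynomial (Fin 7) k}
    (h : ∀ p q r s : k, p * s - q * r = 1 → ∀ v, eval (act6 p q r s v) P = eval v P) :
    IsSL2Invariant P := by
  intro M hM v w hw
  rw [← sextic_act6] at hw
  rw [sextic_injective hw]
  exact h _ _ _ _ (by rwa [Matrix.det_fin_two] at hM) v

lemma IsSL2Invariant.eval_act {P : MvPolynomial (Fin 7) k} (hP : IsSL2Invariant P)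
    {p q r s : k} (h : p * s - q * r = 1) (v : Fin 7 → k) :
    eval (act6 p q r s v) P = eval v P :=
  hP !![p, q; r, s] (by rw [Matrix.det_fin_two]; simpa using h) v _
    (by rw [← sextic_act6]; simp)

end Invariance

section Maps

variable {R S : Type*} [CommRing R] [CommRing S] (φ : R →+* S) (v : Fin 7 → R)

lemma map_quartic (i : Fin 5) : φ (quartic v i) = quartic (fun j => φ (v j)) i := by
  fin_cases i <;> simp [quartic, map_ofNat φ]

lemma map_contract64 (u : Fin 5 → R) (i : Fin 3) :
    φ (contract64 v u i) = contract64 (fun j => φ (v j)) (fun j => φ (u j)) i := by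
  fin_cases i <;> simp [contract64, map_ofNat φ]

lemma map_contract42 (u : Fin 5 → R) (l : Fin 3 → R) (i : Fin 3) :
    φ (contract42 u l i) = contract42 (fun j => φ (u j)) (fun j => φ (l j)) i := by
  fin_cases i <;> simp [contract42, map_ofNat φ]

lemma map_quadL (i : Fin 3) : φ (quadL v i) = quadL (fun j => φ (v j)) i := by
  simp only [quadL, map_contract64, map_quartic]

lemma map_quadM (i : Fin 3) : φ (quadM v i) = quadM (fun j => φ (v j)) i := by
  simp only [quadM, map_contract42, map_quartic, map_quadL]

lemma map_quadN (i : Fin 3) : φ (quadN v i) = quadN (fun j => φ (v j)) i := by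
  simp only [quadN, map_contract42, map_quartic, map_quadM]

lemma map_invA : φ (invA v) = invA fun j => φ (v j) := by
  simp [invA, map_ofNat φ]

lemma map_invB : φ (invB v) = invB fun j => φ (v j) := by
  simp [invB, quarticI, map_ofNat φ, map_quartic]

lemma map_invC : φ (invC v) = invC fun j => φ (v j) := by
  simp [invC, quarticJ, map_ofNat φ, map_quartic]

lemma map_invD : φ (invD v) = invD fun j => φ (v j) := by
  simp [invD, discr2, map_ofNat φ, map_quadM]

lemma map_invE : φ (invE v) = invE fun j => φ (v j) := by
  simp [invE, det3, map_quadL, map_quadM, map_quadN]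

end Maps

section Scale

variable {R : Type*} [CommRing R] (c : R) (v : Fin 7 → R)

lemma quartic_smul : quartic (c • v) = c ^ 2 • quartic v := by
  funext i; fin_cases i <;> simp [quartic] <;> ring

lemma contract64_smul (a : R) (u : Fin 5 → R) :
    contract64 (c • v) (a • u) = (c * a) • contract64 v u := by
  funext i; fin_cases i <;> simp [contract64] <;> ring

lemma contract42_smul (a b : R) (u : Fin 5 → R) (l : Fin 3 → R) :
    contract42 (a • u) (b • l) = (a * b) • contract42 u l := by
  funext i; fin_cases i <;> simp [contract42] <;> ring

lemma quadL_smul : quadL (c • v) = c ^ 3 • quadL v := by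
  rw [quadL, quartic_smul, contract64_smul, quadL]; congr 1; ring

lemma quadM_smul : quadM (c • v) = c ^ 5 • quadM v := by
  rw [quadM, quartic_smul, quadL_smul, contract42_smul, quadM]; congr 1; ring

lemma quadN_smul : quadN (c • v) = c ^ 7 • quadN v := by
  rw [quadN, quartic_smul, quadM_smul, contract42_smul, quadN]; congr 1; ring

lemma invA_smul : invA (c • v) = c ^ 2 * invA v := by
  simp [invA]; ring

lemma invB_smul : invB (c • v) = c ^ 4 * invB v := by
  simp [invB, quarticI, quartic_smul]; ring

lemma invC_smul : invC (c • v) = c ^ 6 * invC v := by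
  simp [invC, quarticJ, quartic_smul]; ring

lemma invD_smul : invD (c • v) = c ^ 10 * invD v := by
  simp [invD, discr2, quadM_smul]; ring

lemma invE_smul : invE (c • v) = c ^ 15 * invE v := by
  simp [invE, det3, quadL_smul, quadM_smul, quadN_smul]; ring

end Scale

section InvAct

variable {R : Type*} [CommRing R] {p q r s : R} (h : p * s - q * r = 1) (v : Fin 7 → R)
include h

lemma quartic_act_one : quartic (act6 p q r s v) = act4 p q r s (quartic v) := by
  rw [quartic_act, h, one_pow, one_smul]

lemma quadL_act_one : quadL (act6 p q r s v) = act2 p q r s (quadL v) := by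
  rw [quadL, quartic_act_one h, contract64_act, h, one_pow, one_smul, quadL]

lemma quadM_act_one : quadM (act6 p q r s v) = act2 p q r s (quadM v) := by
  rw [quadM, quartic_act_one h, quadL_act_one h, contract42_act, h, one_pow, one_smul, quadM]

lemma quadN_act_one : quadN (act6 p q r s v) = act2 p q r s (quadN v) := by
  rw [quadN, quartic_act_one h, quadM_act_one h, contract42_act, h, one_pow, one_smul, quadN]

lemma invA_act_one : invA (act6 p q r s v) = invA v := by
  rw [invA_act, h, one_pow, one_mul]

lemma invB_act_one : invB (act6 p q r s v) = invB v := by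
  rw [invB, quartic_act_one h, quarticI_act, h, one_pow, one_mul, invB]

lemma invC_act_one : invC (act6 p q r s v) = invC v := by
  rw [invC, quartic_act_one h, quarticJ_act, h, one_pow, one_mul, invC]

lemma invD_act_one : invD (act6 p q r s v) = invD v := by
  rw [invD, quadM_act_one h, discr2_act, h, one_pow, one_mul, invD]

lemma invE_act_one : invE (act6 p q r s v) = invE v := by
  rw [invE, quadL_act_one h, quadM_act_one h, quadN_act_one h, det3_act, h, one_pow, one_mul,
    invE]

end InvAct

section Basic

variable (k : Type*) [Field k]

/-- The invariant of degree `2` as a polynomial in the coefficient variables. -/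
noncomputable def genA : MvPolynomial (Fin 7) k := invA X

/-- The invariant of degree `4` as a polynomial in the coefficient variables. -/
noncomputable def genB : MvPolynomial (Fin 7) k := invB X

/-- The invariant of degree `6` as a polynomial in the coefficient variables. -/
noncomputable def genC : MvPolynomial (Fin 7) k := invC X

/-- The invariant of degree `10` as a polynomial in the coefficient variables. -/
noncomputable def genD : MvPolynomial (Fin 7) k := invD X

/-- The invariant of degree `15` as a polynomial in the coefficient variables. -/
noncomputable def genE : MvPolynomial (Fin 7) k := invE X

lemma eval_genA (v : Fin 7 → k) : eval v (genA k) = invA v := by simp [genA, map_invA]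
lemma eval_genB (v : Fin 7 → k) : eval v (genB k) = invB v := by simp [genB, map_invB]
lemma eval_genC (v : Fin 7 → k) : eval v (genC k) = invC v := by simp [genC, map_invC]
lemma eval_genD (v : Fin 7 → k) : eval v (genD k) = invD v := by simp [genD, map_invD]
lemma eval_genE (v : Fin 7 → k) : eval v (genE k) = invE v := by simp [genE, map_invE]

variable [CharZero k]

lemma invariant_genA : IsSL2Invariant (genA k) :=
  isSL2Invariant_of_act fun _ _ _ _ h v => by rw [eval_genA, eval_genA, invA_act_one h]
lemma invariant_genB : IsSL2Invariant (genB k) :=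
  isSL2Invariant_of_act fun _ _ _ _ h v => by rw [eval_genB, eval_genB, invB_act_one h]
lemma invariant_genC : IsSL2Invariant (genC k) :=
  isSL2Invariant_of_act fun _ _ _ _ h v => by rw [eval_genC, eval_genC, invC_act_one h]
lemma invariant_genD : IsSL2Invariant (genD k) :=
  isSL2Invariant_of_act fun _ _ _ _ h v => by rw [eval_genD, eval_genD, invD_act_one h]
lemma invariant_genE : IsSL2Invariant (genE k) :=
  isSL2Invariant_of_act fun _ _ _ _ h v => by rw [eval_genE, eval_genE, invE_act_one h]

lemma genE_ne_zero : genE k ≠ 0 := by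
  intro h
  have := eval_genE k ![0, 0, 1, 0, 0, 1, 0]
  rw [h, map_zero] at this
  simp [invE, det3, quadL, quadM, quadN, quartic, contract64, contract42] at this
  norm_num at this

variable {k}

/-- If rescaling the variables by `u` multiplies `P` by `c`, then every monomial of `P` is itself
multiplied by `c`. -/
lemma prod_pow_eq_of_scale {P : MvPolynomial (Fin 7) k} {u : Fin 7 → k} {c : k}
    (h : ∀ v, eval (fun i => u i * v i) P = c * eval v P) {l : Fin 7 →₀ ℕ} (hl : coeff l P ≠ 0) :
    ∏ i, u i ^ l i = c := by
  have h1 : ∀ Q : MvPolynomial (Fin 7) k, coeff l (aeval (fun i => C (u i) * X i) Q) =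
      (∏ i, u i ^ l i) * coeff l Q := by
    intro Q
    induction Q using MvPolynomial.induction_on' with
    | monomial s a =>
      rw [aeval_monomial, Finsupp.prod_fintype _ _ (by simp)]
      simp only [mul_pow, Finset.prod_mul_distrib, ← map_pow, ← map_prod, algebraMap_eq]
      rw [← mul_assoc, ← map_mul]
      have : ∏ i, (X i : MvPolynomial (Fin 7) k) ^ s i = monomial s 1 := by
        rw [monomial_eq, map_one, one_mul, Finsupp.prod_fintype _ _ (by simp)]
      rw [this, C_mul_monomial, mul_one, coeff_monomial, coeff_monomial]
      split_ifs with hs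
      · rw [hs]; ring
      · simp
    | add p q hp hq => rw [map_add, coeff_add, hp, hq, coeff_add]; ring
  have h2 : aeval (fun i => C (u i) * X i) P = C c * P := by
    refine MvPolynomial.funext fun v => ?_
    have h3 : ∀ Q : MvPolynomial (Fin 7) k, eval v (aeval (fun i => C (u i) * X i) Q) =
        eval (fun i => u i * v i) Q := by
      intro Q
      induction Q using MvPolynomial.induction_on with
      | C a => simp
      | add p q hp hq => rw [map_add, map_add, map_add, hp, hq]
      | mul_X p i hp => rw [map_mul, map_mul, map_mul, hp]; simp
    rw [map_mul, eval_C, ← h v, h3]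
  have := h1 P
  rw [h2, coeff_C_mul] at this
  exact (mul_right_cancel₀ hl this).symm

/-- Homogeneity is detected by scalar multiplication, already by the scalar `2`. -/
lemma isHomogeneous_of_smul {P : MvPolynomial (Fin 7) k} {n : ℕ}
    (h : ∀ (c : k) v, eval (c • v) P = c ^ n * eval v P) : P.IsHomogeneous n := by
  intro l hl
  have := prod_pow_eq_of_scale (u := fun _ => 2) (c := 2 ^ n) (fun v => h 2 v) hl
  rw [Finset.prod_pow_eq_pow_sum] at this
  rw [Finsupp.weight_apply, Finsupp.sum_fintype _ _ (by simp)]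
  simp only [Pi.one_apply, smul_eq_mul, mul_one]
  have h2 : (2 : ℕ) ^ (∑ i, l i) = 2 ^ n := by exact_mod_cast this
  exact Nat.pow_right_injective le_rfl h2

lemma homogeneous_genA : (genA k).IsHomogeneous 2 :=
  isHomogeneous_of_smul fun c v => by rw [eval_genA, eval_genA, invA_smul]
lemma homogeneous_genB : (genB k).IsHomogeneous 4 :=
  isHomogeneous_of_smul fun c v => by rw [eval_genB, eval_genB, invB_smul]
lemma homogeneous_genC : (genC k).IsHomogeneous 6 :=
  isHomogeneous_of_smul fun c v => by rw [eval_genC, eval_genC, invC_smul]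
lemma homogeneous_genD : (genD k).IsHomogeneous 10 :=
  isHomogeneous_of_smul fun c v => by rw [eval_genD, eval_genD, invD_smul]
lemma homogeneous_genE : (genE k).IsHomogeneous 15 :=
  isHomogeneous_of_smul fun c v => by rw [eval_genE, eval_genE, invE_smul]

/-- Invariance under the diagonal matrix with entries `2` and `2⁻¹` forces all weights to vanish. -/
lemma IsSL2Invariant.weight_zero {P : MvPolynomial (Fin 7) k} (hP : IsSL2Invariant P)
    {l : Fin 7 →₀ ℕ} (hl : coeff l P ≠ 0) : ∑ i : Fin 7, (l i : ℤ) * ((i : ℤ) - 3) = 0 := by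
  have h := prod_pow_eq_of_scale (u := fun i : Fin 7 => (2 : k) ^ (2 * (3 - (i : ℤ)))) (c := 1)
    (fun v => ?_) hl
  · have h1 : ∀ i : Fin 7, ((2 : k) ^ (2 * (3 - (i : ℤ)))) ^ l i =
        2 ^ (-2 * ((l i : ℤ) * ((i : ℤ) - 3))) := by
      intro i
      rw [← zpow_natCast, ← zpow_mul]; congr 1; ring
    simp only [h1] at h
    have h2 : ∀ (s : Finset (Fin 7)) (f : Fin 7 → ℤ), ∏ i ∈ s, (2 : k) ^ f i =
        2 ^ ∑ i ∈ s, f i := fun s f => by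
      induction s using Finset.induction_on with
      | empty => simp
      | insert a s ha ih =>
        rw [Finset.prod_insert ha, Finset.sum_insert ha, ih, zpow_add₀ two_ne_zero]
    rw [h2, ← Finset.mul_sum] at h
    have h3 : (2 : ℚ) ^ (-2 * ∑ i : Fin 7, (l i : ℤ) * ((i : ℤ) - 3)) = 1 := by
      apply Rat.cast_injective (α := k)
      push_cast
      exact h
    rw [zpow_eq_one_iff_right₀ (by norm_num) (by norm_num)] at h3
    omega
  · have h0 := hP.eval_act (p := 2) (q := 0) (r := 0) (s := 2⁻¹) (by norm_num) v
    rw [one_mul, ← h0]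
    congr 2
    funext i
    fin_cases i <;> simp [act6] <;> norm_num [zpow_neg]

/-- Invariance under the unipotent matrices `!![1, t; 0, 1]`, differentiated at `t = 0`. -/
lemma IsSL2Invariant.raise_eq_zero {P : MvPolynomial (Fin 7) k} (hP : IsSL2Invariant P) :
    raise k P = 0 := by
  let ψ : MvPolynomial (Fin 7) k →ₐ[k] Polynomial (MvPolynomial (Fin 7) k) :=
    aeval (act6 1 Polynomial.X 0 1 fun j => Polynomial.C (X j))
  -- `ψ` is the action of the generic unipotent matrix; its linear term in `t` is `raise`.
  have h01 : ∀ Q, (ψ Q).coeff 0 = Q ∧ (ψ Q).coeff 1 = raise k Q := by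
    intro Q
    induction Q using MvPolynomial.induction_on with
    | C a =>
      have : ψ (C a) = Polynomial.C (C a) := by
        rw [← algebraMap_eq, AlgHom.commutes]; rfl
      simp [this, Polynomial.coeff_C]
    | add p q hp hq => simp [hp, hq]
    | mul_X p i hp =>
      rw [map_mul, Polynomial.mul_coeff_zero, Polynomial.mul_coeff_one, hp.1, hp.2,
        Derivation.leibniz]
      have : (ψ (X i)).coeff 0 = X i ∧ (ψ (X i)).coeff 1 = raise k (X i) := by
        simp only [ψ, aeval_X, raise, mkDerivation_X]
        fin_cases i <;> simp [act6, Polynomial.coeff_X, Polynomial.coeff_C,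
          Polynomial.coeff_X_pow, Polynomial.mul_coeff_zero, Polynomial.mul_coeff_one]
      rw [this.1, this.2]
      simp only [smul_eq_mul]
      exact ⟨trivial, by ring⟩
  rw [← (h01 P).2]
  refine MvPolynomial.funext fun v => ?_
  -- By invariance `ψ P` is constant in `t`, at every point `v`.
  have hmap : (ψ P).map (eval v) = Polynomial.C (eval v P) := by
    refine Polynomial.funext fun s => ?_
    have h1 : ((Polynomial.evalRingHom s).comp ((Polynomial.mapRingHom (eval v)).comp
        (ψ : MvPolynomial (Fin 7) k →+* _))) = eval (act6 1 s 0 1 v) := by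
      refine ringHom_ext (fun a => ?_) fun i => ?_
      · simp [ψ]
      · simp only [RingHom.comp_apply, RingHom.coe_coe, ψ, aeval_X, eval_X]
        fin_cases i <;> simp [act6] <;> try ring
    have h2 := congrArg (fun f => f P) h1
    simp only [RingHom.comp_apply] at h2
    rw [Polynomial.eval_C, ← hP.eval_act (p := 1) (q := s) (r := 0) (s := 1) (by ring) v]
    exact h2
  have := congrArg (fun f => Polynomial.coeff f 1) hmap
  simpa [Polynomial.coeff_map, Polynomial.coeff_C] using this

end Basic

/-! ### Algebraic independence of the even invariants -/

section Independence

section LeadingForms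

variable {k K : Type*} [Field k] [CommRing K] [Algebra k K] {ι : Type*} [Fintype ι]

omit [Fintype ι] in
/-- The coefficient of a product of powers in the degree prescribed by upper bounds `n i` is the
product of the powers of the coefficients. -/
lemma coeff_prod_pow_of_natDegree_le {p : ι → Polynomial K} {n : ι → ℕ}
    (hp : ∀ i, (p i).natDegree ≤ n i) (l : ι → ℕ) (s : Finset ι) :
    (∏ i ∈ s, p i ^ l i).natDegree ≤ ∑ i ∈ s, l i * n i ∧
      (∏ i ∈ s, p i ^ l i).coeff (∑ i ∈ s, l i * n i) = ∏ i ∈ s, (p i).coeff (n i) ^ l i := by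
  classical
  induction s using Finset.induction_on with
  | empty => simp
  | insert a s ha ih =>
    have hd : (p a ^ l a).natDegree ≤ l a * n a :=
      Polynomial.natDegree_pow_le_of_le _ (hp a)
    rw [Finset.prod_insert ha, Finset.sum_insert ha, Finset.prod_insert ha]
    refine ⟨Polynomial.natDegree_mul_le_of_le hd ih.1, ?_⟩
    rw [Polynomial.coeff_mul_add_eq_of_natDegree_le hd ih.1, ih.2,
      Polynomial.coeff_pow_of_natDegree_le (hp a)]

/-- Polynomials are algebraically independent as soon as their leading coefficients, with respect
to upper bounds `n i` on the degrees, are: a relation would give one among the leading coefficients,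
namely its part of highest weight for the weights `n`. -/
lemma algebraicIndependent_of_coeff {p : ι → Polynomial K} {n : ι → ℕ}
    (hp : ∀ i, (p i).natDegree ≤ n i)
    (hc : AlgebraicIndependent k fun i => (p i).coeff (n i)) : AlgebraicIndependent k p := by
  rw [algebraicIndependent_iff]
  intro Q hQ
  by_contra hne
  have hne' : Q.support.Nonempty := support_nonempty.mpr hne
  obtain ⟨m, hm, hmax⟩ := Q.support.exists_max_image (Finsupp.weight n) hne'
  set N := Finsupp.weight n m with hN
  have key : (aeval p Q).coeff N =
      aeval (fun i => (p i).coeff (n i)) (weightedHomogeneousComponent n N Q) := by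
    rw [weightedHomogeneousComponent_apply, map_sum, Finset.sum_filter]
    conv_lhs => rw [Q.as_sum, map_sum, Polynomial.finsetSum_coeff]
    refine Finset.sum_congr rfl fun l hl => ?_
    have hw : Finsupp.weight n l = ∑ i, l i * n i := by
      rw [Finsupp.weight_apply, Finsupp.sum_fintype _ _ (by simp)]; simp
    have h := coeff_prod_pow_of_natDegree_le hp l Finset.univ
    rw [← hw] at h
    rw [aeval_monomial, Finsupp.prod_fintype _ _ (by simp), ← Algebra.smul_def,
      Polynomial.coeff_smul]
    split_ifs with hlN
    · rw [aeval_monomial, Finsupp.prod_fintype _ _ (by simp), ← Algebra.smul_def, ← hlN, h.2]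
    · rw [Polynomial.coeff_eq_zero_of_natDegree_lt, smul_zero]
      exact lt_of_le_of_lt h.1 (lt_of_le_of_ne (hmax l hl) hlN)
  rw [hQ, Polynomial.coeff_zero] at key
  have h0 := (algebraicIndependent_iff.mp hc) _ key.symm
  have h1 := congrArg (coeff m) h0
  rw [coeff_weightedHomogeneousComponent, if_pos hN.symm, coeff_zero] at h1
  exact (mem_support_iff.mp hm) h1

/-- Monomials with linearly independent exponents are algebraically independent. -/
lemma algebraicIndependent_monomial {σ : Type*} {m : ι → σ →₀ ℕ} {u : ι → k} (hu : ∀ i, u i ≠ 0)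
    (hm : ∀ s t : ι → ℕ, ∑ i, s i • m i = ∑ i, t i • m i → s = t) :
    AlgebraicIndependent k fun i => (monomial (m i) (u i) : MvPolynomial σ k) := by
  classical
  rw [algebraicIndependent_iff]
  intro Q hQ
  have hmon : ∀ l : ι →₀ ℕ, ∏ i, (monomial (m i) (u i) : MvPolynomial σ k) ^ l i =
      monomial (∑ i, l i • m i) (∏ i, u i ^ l i) := by
    intro l
    rw [monomial_sum_prod]; simp only [monomial_pow]
  ext l
  have h := congrArg (coeff (∑ i, l i • m i)) hQ
  rw [Q.as_sum, map_sum, coeff_sum, Finset.sum_eq_single l] at h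
  · rw [aeval_monomial, Finsupp.prod_fintype _ _ (by simp), hmon, ← Algebra.smul_def, coeff_smul,
      coeff_monomial, if_pos rfl, coeff_zero, smul_eq_mul] at h
    rw [coeff_zero]
    exact (mul_eq_zero.mp h).resolve_right
      (Finset.prod_ne_zero_iff.mpr fun i _ => pow_ne_zero _ (hu i))
  · intro b _ hb
    rw [aeval_monomial, Finsupp.prod_fintype _ _ (by simp), hmon, ← Algebra.smul_def, coeff_smul,
      coeff_monomial, if_neg, smul_zero]
    intro h'
    exact hb (DFunLike.coe_injective (hm _ _ h'))
  · intro hl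
    rw [notMem_support_iff.mp hl]; simp

end LeadingForms

section Section

variable {R : Type*} [CommRing R]

/-- The sextics with `a = c = 0`, `b = 1`, and with `d`, `e`, `f`, `g` given the weights
`0, 0, 1, 2` in the polynomial variable. The leading coefficients of the four even invariants in this
variable are single monomials. -/
noncomputable def weightedSection (d e f g : R) : Fin 7 → Polynomial R :=
  ![0, 1, 0, Polynomial.C d, Polynomial.C e, Polynomial.C f * Polynomial.X,
    Polynomial.C g * Polynomial.X ^ 2]

lemma invA_section (d e f g : R) : invA (weightedSection d e f g) =
      Polynomial.C (-10 * d ^ 2) +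
      Polynomial.C (-6 * f) * Polynomial.X := by
  simp [weightedSection, invA, map_ofNat Polynomial.C]; ring

lemma invA_section_coeff (d e f g : R) :
    (invA (weightedSection d e f g)).natDegree ≤ 1 ∧
      (invA (weightedSection d e f g)).coeff 1 = -6 * f := by
  rw [invA_section]
  refine ⟨by compute_degree, ?_⟩
  simp only [Polynomial.coeff_add, Polynomial.coeff_C_mul, 
    Polynomial.coeff_X, Polynomial.coeff_C]
  simp

lemma invB_section (d e f g : R) : invB (weightedSection d e f g) =
      Polynomial.C (-216 * d * e ^ 2 + 192 * d ^ 4) +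
      Polynomial.C (576 * d ^ 2 * f) * Polynomial.X +
      Polynomial.C (108 * e * g) * Polynomial.X ^ 2 := by
  simp [weightedSection, invB, quarticI, quartic, map_ofNat Polynomial.C]; ring

lemma invB_section_coeff (d e f g : R) :
    (invB (weightedSection d e f g)).natDegree ≤ 2 ∧
      (invB (weightedSection d e f g)).coeff 2 = 108 * e * g := by
  rw [invB_section]
  refine ⟨by compute_degree, ?_⟩
  simp only [Polynomial.coeff_add, Polynomial.coeff_C_mul, Polynomial.coeff_X_pow,
    Polynomial.coeff_X, Polynomial.coeff_C]
  simp

lemma invC_section (d e f g : R) : invC (weightedSection d e f g) =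
      Polynomial.C (-1458 * e ^ 4 - 3456 * d ^ 3 * e ^ 2 - 512 * d ^ 6) +
      Polynomial.C (1944 * d * e ^ 2 * f + 4608 * d ^ 4 * f) * Polynomial.X +
      Polynomial.C (432 * d ^ 2 * e * g) * Polynomial.X ^ 2 +
      Polynomial.C (216 * d * g ^ 2) * Polynomial.X ^ 4 := by
  simp [weightedSection, invC, quarticJ, quartic, map_ofNat Polynomial.C]; ring

lemma invC_section_coeff (d e f g : R) :
    (invC (weightedSection d e f g)).natDegree ≤ 4 ∧
      (invC (weightedSection d e f g)).coeff 4 = 216 * d * g ^ 2 := by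
  rw [invC_section]
  refine ⟨by compute_degree, ?_⟩
  simp only [Polynomial.coeff_add, Polynomial.coeff_C_mul, Polynomial.coeff_X_pow,
    Polynomial.coeff_X, Polynomial.coeff_C]
  simp

lemma invD_section (d e f g : R) : invD (weightedSection d e f g) =
      Polynomial.C (-1679616 * d * e ^ 6 - 3732480 * d ^ 4 * e ^ 4 - 3686400 * d ^ 7 * e ^ 2 -
        1179648 * d ^ 10) +
      Polynomial.C (3732480 * d ^ 2 * e ^ 4 * f + 4313088 * d ^ 5 * e ^ 2 * f + 2359296 * d ^
        8 * f) * Polynomial.X +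
      Polynomial.C (-209952 * e ^ 4 * f ^ 2 - 1049760 * e ^ 5 * g - 2985984 * d ^ 3 * e ^ 2 *
        f ^ 2 - 1658880 * d ^ 3 * e ^ 3 * g - 1179648 * d ^ 6 * f ^ 2 - 147456 * d ^ 6 * e *
        g) * Polynomial.X ^ 2 +
      Polynomial.C (3265920 * d * e ^ 3 * f * g + 3317760 * d ^ 4 * e * f * g) * Polynomial.X
        ^ 3 +
      Polynomial.C (-1990656 * d ^ 2 * e * f ^ 2 * g - 1088640 * d ^ 2 * e ^ 2 * g ^ 2 -
        995328 * d ^ 5 * g ^ 2) * Polynomial.X ^ 4 +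
      Polynomial.C (-46656 * e ^ 2 * f * g ^ 2 + 995328 * d ^ 3 * f * g ^ 2) * Polynomial.X ^
        5 +
      Polynomial.C (31104 * d * e * g ^ 3) * Polynomial.X ^ 6 +
      Polynomial.C (-2592 * g ^ 4) * Polynomial.X ^ 8 := by
  simp [weightedSection, invD, discr2, quadM, quadL, contract42, contract64, quartic, map_ofNat Polynomial.C]; ring

lemma invD_section_coeff (d e f g : R) :
    (invD (weightedSection d e f g)).natDegree ≤ 8 ∧
      (invD (weightedSection d e f g)).coeff 8 = -2592 * g ^ 4 := by
  rw [invD_section]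
  refine ⟨by compute_degree, ?_⟩
  simp only [Polynomial.coeff_add, Polynomial.coeff_C_mul, Polynomial.coeff_X_pow,
    Polynomial.coeff_X, Polynomial.coeff_C]
  simp


end Section

variable (k : Type*) [Field k] [CharZero k]

/-- On `weightedSection` the leading coefficients are `-6 f`, `108 e g`, `216 d g ^ 2` and
`-2592 g ^ 4`, whose exponents are linearly independent. -/
theorem algebraicIndependent_gens :
    AlgebraicIndependent k ![genA k, genB k, genC k, genD k] := by
  let v : Fin 7 → Polynomial (MvPolynomial (Fin 4) k) := weightedSection (X 0) (X 1) (X 2) (X 3)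
  let φ : MvPolynomial (Fin 7) k →ₐ[k] Polynomial (MvPolynomial (Fin 4) k) := aeval v
  have hφ : ∀ j, φ.toRingHom (X j) = v j := fun j => by simp [φ]
  have hA : φ (genA k) = invA v :=
    (map_invA φ.toRingHom X).trans (by simp only [hφ])
  have hB : φ (genB k) = invB v :=
    (map_invB φ.toRingHom X).trans (by simp only [hφ])
  have hC : φ (genC k) = invC v :=
    (map_invC φ.toRingHom X).trans (by simp only [hφ])
  have hD : φ (genD k) = invD v :=
    (map_invD φ.toRingHom X).trans (by simp only [hφ])
  obtain ⟨a1, a2⟩ := invA_section_coeff (X 0 : MvPolynomial (Fin 4) k) (X 1) (X 2) (X 3)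
  obtain ⟨b1, b2⟩ := invB_section_coeff (X 0 : MvPolynomial (Fin 4) k) (X 1) (X 2) (X 3)
  obtain ⟨c1, c2⟩ := invC_section_coeff (X 0 : MvPolynomial (Fin 4) k) (X 1) (X 2) (X 3)
  obtain ⟨d1, d2⟩ := invD_section_coeff (X 0 : MvPolynomial (Fin 4) k) (X 1) (X 2) (X 3)
  refine AlgebraicIndependent.of_comp φ (algebraicIndependent_of_coeff (n := ![1, 2, 4, 8]) ?_ ?_)
  · intro i
    fin_cases i
    · exact (congrArg _ hA).trans_le a1
    · exact (congrArg _ hB).trans_le b1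
    · exact (congrArg _ hC).trans_le c1
    · exact (congrArg _ hD).trans_le d1
  · have key := algebraicIndependent_monomial (k := k) (u := ![-6, 108, 216, -2592])
      (m := ![.single (2 : Fin 4) 1, .single 1 1 + .single 3 1, .single 0 1 + .single 3 2,
        .single 3 4]) (by intro i; fin_cases i <;> simp) ?_
    · convert key using 2 with i
      fin_cases i
      · refine (congrArg (Polynomial.coeff · 1) hA).trans (a2.trans ?_)
        simp [map_ofNat C, monomial_eq]
      · refine (congrArg (Polynomial.coeff · 2) hB).trans (b2.trans ?_)
        simp [map_ofNat C, monomial_eq, Finsupp.prod_add_index', pow_add, mul_assoc]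
      · refine (congrArg (Polynomial.coeff · 4) hC).trans (c2.trans ?_)
        simp [map_ofNat C, monomial_eq, Finsupp.prod_add_index', pow_add, mul_assoc]
      · refine (congrArg (Polynomial.coeff · 8) hD).trans (d2.trans ?_)
        simp [map_ofNat C, monomial_eq]
    · intro s t h
      have h' := DFunLike.congr_fun h
      have h0 := h' 0
      have h1 := h' 1
      have h2 := h' 2
      have h3 := h' 3
      simp [Fin.sum_univ_four] at h0 h1 h2 h3
      funext i
      fin_cases i <;> simp <;> omega

end Independence

/-! ### Generation of the invariant ring -/

section Assembly

variable {k : Type*} [Field k]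

section Invariants

lemma IsSL2Invariant.mul {P Q : MvPolynomial (Fin 7) k} (hP : IsSL2Invariant P)
    (hQ : IsSL2Invariant Q) : IsSL2Invariant (P * Q) := fun M hM v w h => by
  rw [map_mul, map_mul, hP M hM v w h, hQ M hM v w h]

lemma IsSL2Invariant.pow {P : MvPolynomial (Fin 7) k} (hP : IsSL2Invariant P) (n : ℕ) :
    IsSL2Invariant (P ^ n) := fun M hM v w h => by
  rw [map_pow, map_pow, hP M hM v w h]

lemma IsSL2Invariant.prod {ι : Type*} {s : Finset ι} {f : ι → MvPolynomial (Fin 7) k}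
    (hf : ∀ i, IsSL2Invariant (f i)) : IsSL2Invariant (∏ i ∈ s, f i) := fun M hM v w h => by
  rw [map_prod, map_prod]
  exact Finset.prod_congr rfl fun i _ => hf i M hM v w h

variable [CharZero k]

/-- The homogeneous components of an invariant have weight `0` and are killed by `raise`, since
`raise` preserves the degree. -/
lemma IsSL2Invariant.component_mem_hwSpace {P : MvPolynomial (Fin 7) k} (hP : IsSL2Invariant P)
    (d : ℕ) : homogeneousComponent d P ∈ hwSpace k d := by
  have hw : ∀ e : ℕ, homogeneousComponent e P ∈ wtSpace k e 0 := by
    intro e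
    rw [mem_weightedHomogeneousSubmodule]
    intro l hl
    rw [coeff_homogeneousComponent] at hl
    split_ifs at hl with hd
    · rw [weight_wt, hP.weight_zero hl, Prod.mk.injEq]
      refine ⟨?_, rfl⟩
      rw [← hd, Finsupp.degree_eq_sum]; push_cast; rfl
    · exact absurd rfl hl
  refine ⟨hw d, ?_⟩
  have hsum := hP.raise_eq_zero
  rw [← sum_homogeneousComponent P, map_sum] at hsum
  have h := congrArg (weightedHomogeneousComponent wt ((d : ℤ), (1 : ℤ))) hsum
  rw [map_sum, map_zero] at h
  have hr : ∀ e : ℕ, raise k (homogeneousComponent e P) ∈ wtSpace k e 1 := fun e => by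
    simpa using raise_mem (hw e)
  show raise k (homogeneousComponent d P) = 0
  by_cases hd : d ≤ P.totalDegree
  · rw [Finset.sum_eq_single d] at h
    · rwa [weightedHomogeneousComponent_of_mem (hr d), if_pos rfl] at h
    · intro e _ he
      rw [weightedHomogeneousComponent_of_mem (hr e), if_neg]
      simpa using fun h => he h.symm
    · intro h'
      exact absurd (Finset.mem_range.mpr (by omega)) h'
  · rw [homogeneousComponent_eq_zero _ _ (by omega), map_zero]

lemma IsSL2Invariant.mem_hwSpace {P : MvPolynomial (Fin 7) k} (hP : IsSL2Invariant P)
    {d : ℕ} (hd : P.IsHomogeneous d) : P ∈ hwSpace k d := by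
  have := hP.component_mem_hwSpace d
  rwa [homogeneousComponent_of_mem hd, if_pos rfl] at this

end Invariants

variable (k) in
/-- The four invariants of even degree. -/
noncomputable def evenGens : Fin 4 → MvPolynomial (Fin 7) k :=
  ![genA k, genB k, genC k, genD k]

variable (k) in
/-- The ring `k[A, B, C, D]`. -/
noncomputable abbrev evenRing : Subalgebra k (MvPolynomial (Fin 7) k) :=
  Algebra.adjoin k {genA k, genB k, genC k, genD k}

/-- The index set counted by `numGen`: the degree contributions of the four even invariants in a
monomial of total degree `d`. -/
def genIdx (d : ℕ) : Finset (Fin 4 →₀ ℕ) :=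
  {l ∈ (Finset.univ : Finset (Fin 4)).finsuppAntidiag d | ∀ i, genDeg i ∣ l i}

lemma card_genIdx (d : ℕ) : (genIdx d).card = numGen d := rfl

variable (k) in
/-- The monomial in the even invariants to which the `i`-th invariant contributes the degree
`l i`. -/
noncomputable def genMonomial (l : Fin 4 →₀ ℕ) : MvPolynomial (Fin 7) k :=
  ∏ i, evenGens k i ^ (l i / genDeg i)

lemma evenGens_mem (i : Fin 4) : evenGens k i ∈ evenRing k := by
  apply Algebra.subset_adjoin
  fin_cases i <;> simp [evenGens]

lemma genMonomial_mem (l : Fin 4 →₀ ℕ) : genMonomial k l ∈ evenRing k :=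
  prod_mem fun i _ => pow_mem (evenGens_mem i) _

variable [CharZero k]

lemma invariant_genMonomial (l : Fin 4 →₀ ℕ) : IsSL2Invariant (genMonomial k l) := by
  refine IsSL2Invariant.prod fun i => IsSL2Invariant.pow ?_ _
  fin_cases i
  · exact invariant_genA k
  · exact invariant_genB k
  · exact invariant_genC k
  · exact invariant_genD k

lemma homogeneous_evenGens (i : Fin 4) : (evenGens k i).IsHomogeneous (genDeg i) := by
  fin_cases i
  · exact homogeneous_genA
  · exact homogeneous_genB
  · exact homogeneous_genC
  · exact homogeneous_genD

lemma homogeneous_genMonomial {d : ℕ} {l : Fin 4 →₀ ℕ} (hl : l ∈ genIdx d) :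
    (genMonomial k l).IsHomogeneous d := by
  rw [genIdx, Finset.mem_filter, Finset.mem_finsuppAntidiag] at hl
  have h := IsHomogeneous.prod Finset.univ (fun i => evenGens k i ^ (l i / genDeg i))
    (fun i => genDeg i * (l i / genDeg i)) fun i _ => (homogeneous_evenGens i).pow _
  have hd : ∑ i, genDeg i * (l i / genDeg i) = d := by
    rw [← hl.1.1]
    exact Finset.sum_congr rfl fun i _ => Nat.mul_div_cancel' (hl.2 i)
  rwa [hd] at h

lemma linearIndependent_genMonomial (d : ℕ) :
    LinearIndependent k fun l : genIdx d => genMonomial k (l : Fin 4 →₀ ℕ) := by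
  have hai : AlgebraicIndependent k (evenGens k) := algebraicIndependent_gens k
  have h1 : LinearIndependent k fun m : Fin 4 →₀ ℕ => aeval (evenGens k) (monomial m (1 : k)) := by
    have := (basisMonomials (Fin 4) k).linearIndependent.map' (aeval (evenGens k)).toLinearMap
      (LinearMap.ker_eq_bot.mpr hai)
    simpa [Function.comp_def] using this
  have hinj : Function.Injective fun l : genIdx d =>
      Finsupp.equivFunOnFinite.symm fun i => (l : Fin 4 →₀ ℕ) i / genDeg i := by
    rintro ⟨l, hl⟩ ⟨l', hl'⟩ h
    ext i
    rw [genIdx, Finset.mem_filter] at hl hl'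
    have hi : l i / genDeg i = l' i / genDeg i := DFunLike.congr_fun h i
    show l i = l' i
    rw [← Nat.mul_div_cancel' (hl.2 i), hi, Nat.mul_div_cancel' (hl'.2 i)]
  convert h1.comp _ hinj using 2 with l
  rw [Function.comp_apply, aeval_monomial, map_one, one_mul, Finsupp.prod_fintype _ _ (by simp)]
  rfl

/-- Linearly independent elements of `hwSpace k d` span it if there are as many of them as its
dimension. -/
lemma span_eq_hwSpace {d : ℕ} {ι : Type*} [Fintype ι] {f : ι → MvPolynomial (Fin 7) k}
    (hf : LinearIndependent k f) (hmem : ∀ i, f i ∈ hwSpace k d)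
    (hcard : (numMon d 0 : ℤ) - numMon d 1 = Fintype.card ι) :
    Submodule.span k (Set.range f) = hwSpace k d := by
  have hfin : Module.Finite k (hwSpace k d) :=
    Submodule.finiteDimensional_of_le (inf_le_left : hwSpace k d ≤ wtSpace k d 0)
  refine Submodule.eq_of_le_of_finrank_eq (Submodule.span_le.mpr ?_) ?_
  · rintro _ ⟨i, rfl⟩
    exact hmem i
  · rw [finrank_span_eq_card hf]
    have := finrank_hwSpace (k := k) d
    omega

lemma numGen_odd {d : ℕ} (hd : Odd d) : numGen d = 0 := by
  rw [← card_genIdx, Finset.card_eq_zero, Finset.eq_empty_iff_forall_notMem]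
  intro l hl
  rw [genIdx, Finset.mem_filter, Finset.mem_finsuppAntidiag] at hl
  have h0 := hl.2 0
  have h1 := hl.2 1
  have h2 := hl.2 2
  have h3 := hl.2 3
  have hs := hl.1.1
  simp [genDeg, Fin.sum_univ_four] at h0 h1 h2 h3 hs
  obtain ⟨m, rfl⟩ := hd
  omega

/-- In even degree the monomials in the even invariants already exhaust `hwSpace k d`. -/
lemma mem_evenRing_of_even {d : ℕ} (hd : Even d) {P : MvPolynomial (Fin 7) k}
    (hP : P ∈ hwSpace k d) : P ∈ evenRing k := by
  rw [← span_eq_hwSpace (linearIndependent_genMonomial (k := k) d) (fun l =>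
    (invariant_genMonomial _).mem_hwSpace (homogeneous_genMonomial l.2)) ?_] at hP
  · refine (Submodule.span_le (p := Subalgebra.toSubmodule (evenRing k))).mpr ?_ hP
    rintro _ ⟨l, rfl⟩
    exact genMonomial_mem _
  · rw [numMon_sub, Fintype.card_coe, card_genIdx]
    split_ifs with h
    · rw [numGen_odd (d := d - 15)]
      · simp
      · exact Nat.Even.sub_odd h hd (by decide)
    · simp

/-- In odd degree `d` the products of `E` with the monomials of degree `d - 15` exhaust
`hwSpace k d`. -/
lemma exists_mul_genE_of_odd {d : ℕ} (hd : Odd d) {P : MvPolynomial (Fin 7) k}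
    (hP : P ∈ hwSpace k d) : ∃ q ∈ evenRing k, P = q * genE k := by
  have hn := numMon_sub d
  rw [numGen_odd hd] at hn
  split_ifs at hn with h
  · have hli : LinearIndependent k fun l : genIdx (d - 15) => genMonomial k l.1 * genE k :=
      (linearIndependent_genMonomial (k := k) (d - 15)).map' (LinearMap.mulRight k (genE k))
        (LinearMap.ker_eq_bot.mpr (mul_left_injective₀ (genE_ne_zero k)))
    rw [← span_eq_hwSpace hli (fun l => ((invariant_genMonomial _).mul
      (invariant_genE k)).mem_hwSpace ?_) ?_] at hP
    · have hle : Submodule.span k (Set.range fun l : genIdx (d - 15) =>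
          genMonomial k l.1 * genE k) ≤
          (Subalgebra.toSubmodule (evenRing k)).map (LinearMap.mulRight k (genE k)) := by
        rw [Submodule.span_le]
        rintro _ ⟨l, rfl⟩
        exact ⟨_, genMonomial_mem _, rfl⟩
      obtain ⟨q, hq, rfl⟩ := hle hP
      exact ⟨q, hq, rfl⟩
    · rw [hn, Fintype.card_coe, card_genIdx]; simp
    · have := (homogeneous_genMonomial (k := k) l.2).mul homogeneous_genE
      rwa [Nat.sub_add_cancel h] at this
  · rw [← span_eq_hwSpace (linearIndependent_empty_type (v := Fin.elim0)) (fun i => i.elim0)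
      (by rw [hn]; simp)] at hP
    refine ⟨0, zero_mem _, ?_⟩
    simpa using hP

lemma IsSL2Invariant.exists_decomp {P : MvPolynomial (Fin 7) k} (hP : IsSL2Invariant P) :
    ∃ p ∈ evenRing k, ∃ q ∈ evenRing k, P = p + q * genE k := by
  have h : ∀ d, ∃ p ∈ evenRing k, ∃ q ∈ evenRing k,
      homogeneousComponent d P = p + q * genE k := by
    intro d
    rcases Nat.even_or_odd d with hd | hd
    · exact ⟨_, mem_evenRing_of_even hd (hP.component_mem_hwSpace d), 0, zero_mem _, by simp⟩
    · obtain ⟨q, hq, h⟩ := exists_mul_genE_of_odd hd (hP.component_mem_hwSpace d)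
      exact ⟨0, zero_mem _, q, hq, by rw [h, zero_add]⟩
  choose p hp q hq h using h
  refine ⟨∑ d ∈ Finset.range (P.totalDegree + 1), p d, sum_mem fun d _ => hp d,
    ∑ d ∈ Finset.range (P.totalDegree + 1), q d, sum_mem fun d _ => hq d, ?_⟩
  conv_lhs => rw [← sum_homogeneousComponent P]
  rw [Finset.sum_mul, ← Finset.sum_add_distrib]
  exact Finset.sum_congr rfl fun d _ => h d

variable (k) in
/-- The substitution `v ↦ -v`. It fixes `k[A, B, C, D]` and changes the sign of `E`. -/
noncomputable def negVars : MvPolynomial (Fin 7) k →ₐ[k] MvPolynomial (Fin 7) k :=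
  aeval ((-1 : MvPolynomial (Fin 7) k) • X)

omit [CharZero k]

lemma negVars_X : (fun j => (negVars k).toRingHom (X j)) = (-1 : MvPolynomial (Fin 7) k) • X := by
  funext j
  exact aeval_X _ j

lemma negVars_of_mem {P : MvPolynomial (Fin 7) k} (hP : P ∈ evenRing k) : negVars k P = P := by
  have h : Set.EqOn (negVars k) (AlgHom.id k _) {genA k, genB k, genC k, genD k} := by
    rintro _ (rfl | rfl | rfl | rfl)
    · exact (map_invA (negVars k).toRingHom X).trans (by rw [negVars_X, invA_smul]; simp [genA])
    · refine (map_invB (negVars k).toRingHom X).trans ?_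
      rw [negVars_X, invB_smul, Even.neg_one_pow (by decide), one_mul]; rfl
    · refine (map_invC (negVars k).toRingHom X).trans ?_
      rw [negVars_X, invC_smul, Even.neg_one_pow (by decide), one_mul]; rfl
    · refine (map_invD (negVars k).toRingHom X).trans ?_
      rw [negVars_X, invD_smul, Even.neg_one_pow (by decide), one_mul]; rfl
  exact AlgHom.eqOn_adjoin_iff.mpr h hP

lemma negVars_genE : negVars k (genE k) = -genE k := by
  refine (map_invE (negVars k).toRingHom X).trans ?_
  rw [negVars_X, invE_smul, Odd.neg_one_pow (by decide), neg_one_mul]; rfl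

variable [CharZero k]

lemma decomp_unique {p q p' q' : MvPolynomial (Fin 7) k} (hp : p ∈ evenRing k)
    (hq : q ∈ evenRing k) (hp' : p' ∈ evenRing k) (hq' : q' ∈ evenRing k)
    (h : p + q * genE k = p' + q' * genE k) : p' = p ∧ q' = q := by
  have h2 := congrArg (negVars k) h
  simp only [map_add, map_mul, negVars_of_mem hp, negVars_of_mem hq, negVars_of_mem hp',
    negVars_of_mem hq', negVars_genE] at h2
  have two : (2 : MvPolynomial (Fin 7) k) ≠ 0 := two_ne_zero
  constructor
  · refine mul_left_cancel₀ two ?_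
    linear_combination -h - h2
  · refine mul_right_cancel₀ (genE_ne_zero k) (mul_left_cancel₀ two ?_)
    linear_combination h2 - h

end Assembly

/-- There are homogeneous SL₂-invariants `A, B, C, D, E` of degrees
2, 4, 6, 10, 15 with `A, B, C, D` algebraically independent, `E² ∈ k[A,B,C,D]`,
`E ∉ k[A,B,C,D]`, and the invariant ring is a free `k[A,B,C,D]`-module with basis
`{1, E}`: every SL₂-invariant `P` is uniquely `P = p + q·E` with `p, q ∈ k[A,B,C,D]`. -/
theorem stmt11 {k : Type*} [Field k] [CharZero k] :
    ∃ A B C D E : MvPolynomial (Fin 7) k,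
      A.IsHomogeneous 2 ∧ B.IsHomogeneous 4 ∧ C.IsHomogeneous 6 ∧
      D.IsHomogeneous 10 ∧ E.IsHomogeneous 15 ∧
      IsSL2Invariant A ∧ IsSL2Invariant B ∧ IsSL2Invariant C ∧
      IsSL2Invariant D ∧ IsSL2Invariant E ∧
      AlgebraicIndependent k ![A, B, C, D] ∧
      E ^ 2 ∈ Algebra.adjoin k ({A, B, C, D} : Set (MvPolynomial (Fin 7) k)) ∧
      E ∉ Algebra.adjoin k ({A, B, C, D} : Set (MvPolynomial (Fin 7) k)) ∧
      ∀ P : MvPolynomial (Fin 7) k, IsSL2Invariant P →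
        ∃ p q : MvPolynomial (Fin 7) k,
          p ∈ Algebra.adjoin k ({A, B, C, D} : Set (MvPolynomial (Fin 7) k)) ∧
          q ∈ Algebra.adjoin k ({A, B, C, D} : Set (MvPolynomial (Fin 7) k)) ∧
          P = p + q * E ∧
          ∀ p' q' : MvPolynomial (Fin 7) k,
            p' ∈ Algebra.adjoin k ({A, B, C, D} : Set (MvPolynomial (Fin 7) k)) →
            q' ∈ Algebra.adjoin k ({A, B, C, D} : Set (MvPolynomial (Fin 7) k)) →
            P = p' + q' * E → p' = p ∧ q' = q := by
  refine ⟨genA k, genB k, genC k, genD k, genE k, homogeneous_genA, homogeneous_genB,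
    homogeneous_genC, homogeneous_genD, homogeneous_genE, invariant_genA k, invariant_genB k,
    invariant_genC k, invariant_genD k, invariant_genE k, algebraicIndependent_gens k, ?_, ?_, ?_⟩
  · exact mem_evenRing_of_even (d := 30) (by decide)
      (((invariant_genE k).pow 2).mem_hwSpace (homogeneous_genE.pow 2))
  · intro h
    have := decomp_unique (zero_mem _) (one_mem _) h (zero_mem _)
      (show 0 + 1 * genE k = genE k + 0 * genE k by ring)
    exact zero_ne_one this.2
  · intro P hP
    obtain ⟨p, hp, q, hq, h⟩ := hP.exists_decomp
    exact ⟨p, q, hp, hq, h, fun p' q' hp' hq' h' => decomp_unique hp hq hp' hq' (h.symm.trans h')⟩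
end

section
/- Let k be a field and m, n ≥ 1 integers. The weighted projective line ℙ(m,n), i.e. Proj of the polynomial ring k[x,y] graded with x homogeneous of degree m and y homogeneous of degree n, is isomorphic as a k-scheme to the projective line ℙ¹_k. (In particular Proj k[g₂,g₃] with weights 4 and 6, the coarse space of ℳ̄_{1,1}, is isomorphic to ℙ¹.) -/
/-!
Let `L = lcm m n`. A monomial `x ^ i * y ^ j` of weighted degree `m * i + n * j` divisible by `L` has
`m * i` and `n * j` both divisible by `L`: each of them is divisible by its own weight, and by the
other weight because their sum is. Hence the `L`-th Veronese subring of `k[x, y]` with weights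
`(m, n)` is the polynomial ring on `x ^ (L / m)` and `y ^ (L / n)`, both of degree `L`; that is, the
substitution `x ↦ x ^ (L / m)`, `y ↦ y ^ (L / n)` identifies the standard graded `k[x, y]` with this
Veronese subring (`isVeroneseEmbedding_powHom`).

It remains to see that passing to a Veronese subring does not change `Proj`
(`IsVeroneseEmbedding.projIso`). If `ψ : A → B` identifies `A` with the `L`-th Veronese subring of
`B`, then for homogeneous `s` it induces an isomorphism `A_(s) ≃ B_(ψ s)`: a fraction of degree zero
over `ψ s ^ n` has its numerator in degree divisible by `L`
(`IsVeroneseEmbedding.awayHom_bijective`). The opens `D₊(ψ s)` cover `Proj B` because `L`-th powers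
of homogeneous elements lie in the image of `ψ` (`IsVeroneseEmbedding.exists_mem_basicOpen`). The
isomorphisms are compatible with the restrictions `D₊(s * t) ⊆ D₊(s)`, so they and their inverses
glue.
-/

open AlgebraicGeometry MvPolynomial

attribute [local instance] MvPolynomial.weightedGradedAlgebra

/-! ### Veronese subrings and `Proj` -/

section Veronese

open HomogeneousLocalization CategoryTheory

universe u

variable {A B σ τ : Type u} [CommRing A] [SetLike σ A] [AddSubgroupClass σ A]
  [CommRing B] [SetLike τ B] [AddSubgroupClass τ B]
  {𝒜 : ℕ → σ} {ℬ : ℕ → τ} [GradedRing 𝒜] [GradedRing ℬ]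

variable (𝒜 ℬ) in
/-- `ψ : A →+* B` identifies the graded ring `A` with the `L`-th Veronese subring `⨁ i, ℬ (L * i)`
of `B`, with degrees divided by `L`. -/
structure IsVeroneseEmbedding (L : ℕ) (ψ : A →+* B) : Prop where
  pos : 0 < L
  injective : Function.Injective ψ
  map_mem : ∀ {i : ℕ} {a : A}, a ∈ 𝒜 i → ψ a ∈ ℬ (L * i)
  exists_of_mem : ∀ {i : ℕ} {b : B}, b ∈ ℬ (L * i) → ∃ a ∈ 𝒜 i, ψ a = b

namespace IsVeroneseEmbedding

lemma powers_le_comap {ψ : A →+* B} (s : A) :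
    Submonoid.powers s ≤ (Submonoid.powers (ψ s)).comap ψ := by
  rintro _ ⟨n, rfl⟩
  exact ⟨n, by simp⟩

variable {L : ℕ} {ψ : A →+* B} (h : IsVeroneseEmbedding 𝒜 ℬ L ψ)

/-- The map `A_(s) → B_(ψ s)`, `a / s ^ n ↦ ψ a / ψ s ^ n`, on degree-zero localizations. Degrees
are scaled by `L`, so the functoriality of `HomogeneousLocalization` for degree-preserving maps does
not apply. -/
def awayFun (s : A) : Away 𝒜 s → Away ℬ (ψ s) :=
  Quotient.map'
    (fun x ↦ ⟨L * x.1, ⟨_, h.map_mem x.2.2⟩, ⟨_, h.map_mem x.3.2⟩,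
      (Submonoid.powers (ψ s)).mem_carrier.1 <| by
        obtain ⟨n, hn⟩ := x.4
        exact ⟨n, by simp [← hn]⟩⟩)
    fun x y (e : x.embedding = y.embedding) ↦ by
      apply_fun IsLocalization.map (Localization (Submonoid.powers (ψ s))) ψ
        (powers_le_comap s) at e
      simp_rw [HomogeneousLocalization.NumDenSameDeg.embedding, Localization.mk_eq_mk',
        IsLocalization.map_mk', ← Localization.mk_eq_mk'] at e
      exact e

set_option linter.unusedSectionVars false in
lemma val_awayFun (s : A) (x : Away 𝒜 s) :
    (h.awayFun s x).val = IsLocalization.map (Localization (Submonoid.powers (ψ s))) ψ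
      (powers_le_comap s) x.val := by
  obtain ⟨x, rfl⟩ := Quotient.mk''_surjective x
  change Localization.mk _ _ = IsLocalization.map _ _ _ (Localization.mk _ _)
  rw [Localization.mk_eq_mk', Localization.mk_eq_mk', IsLocalization.map_mk']

/-- `awayFun` as a ring homomorphism: it is the restriction of the map of full localizations
induced by `ψ`. -/
def awayHom (s : A) : Away 𝒜 s →+* Away ℬ (ψ s) where
  toFun := h.awayFun s
  map_add' x y := by ext; simp only [val_awayFun, val_add, map_add]
  map_mul' x y := by ext; simp only [val_awayFun, val_mul, map_mul]
  map_zero' := by ext; simp only [val_awayFun, val_zero, map_zero]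
  map_one' := by ext; simp only [val_awayFun, val_one, map_one]

lemma val_awayHom_mk {d : ℕ} {s : A} (hs : s ∈ 𝒜 d) (n : ℕ) (a : A) (ha : a ∈ 𝒜 (n • d)) :
    (h.awayHom s (Away.mk 𝒜 hs n a ha)).val =
      Localization.mk (ψ a) (⟨ψ s ^ n, ⟨n, rfl⟩⟩ : Submonoid.powers (ψ s)) := by
  change (h.awayFun s (Away.mk 𝒜 hs n a ha)).val = _
  rw [val_awayFun, Away.val_mk, Localization.mk_eq_mk', Localization.mk_eq_mk', IsLocalization.map_mk']
  congr 2
  exact map_pow ψ s n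

/-- Surjectivity holds because the numerator over `ψ s ^ n` has degree `L * (n * d)`, hence is in the
image of `ψ`. -/
lemma awayHom_bijective {d : ℕ} {s : A} (hs : s ∈ 𝒜 d) :
    Function.Bijective (h.awayHom s) := by
  constructor
  · rw [injective_iff_map_eq_zero]
    intro x hx
    obtain ⟨n, a, ha, rfl⟩ := Away.mk_surjective 𝒜 hs x
    apply_fun HomogeneousLocalization.val at hx
    rw [h.val_awayHom_mk hs, val_zero, Localization.mk_eq_mk', IsLocalization.mk'_eq_zero_iff]
      at hx
    obtain ⟨⟨_, j, rfl⟩, hj⟩ := hx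
    ext
    rw [Away.val_mk, val_zero, Localization.mk_eq_mk', IsLocalization.mk'_eq_zero_iff]
    refine ⟨⟨s ^ j, j, rfl⟩, h.injective ?_⟩
    simpa using hj
  · intro y
    obtain ⟨n, b, hb, rfl⟩ := Away.mk_surjective ℬ (h.map_mem hs) y
    rw [show n • (L * d) = L * (n • d) by simp; ring] at hb
    obtain ⟨a, ha, rfl⟩ := h.exists_of_mem hb
    refine ⟨Away.mk 𝒜 hs n a ha, ?_⟩
    ext
    rw [h.val_awayHom_mk hs, Away.val_mk]

/-- The isomorphism `A_(s) ≃ B_(ψ s)`, for `s` homogeneous. -/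
noncomputable def awayEquiv {d : ℕ} {s : A} (hs : s ∈ 𝒜 d) : Away 𝒜 s ≃+* Away ℬ (ψ s) :=
  RingEquiv.ofBijective (h.awayHom s) (h.awayHom_bijective hs)

/-- The isomorphisms `A_(s) ≃ B_(ψ s)` commute with the restrictions `A_(s) → A_(s * t)`. The product
`s * t` is an arbitrary `x` equal to it, so that the roles of `s` and `t` can be exchanged. -/
lemma awayEquiv_awayMap {c d e : ℕ} {s t x : A} (hs : s ∈ 𝒜 d) (ht : t ∈ 𝒜 e) (hx : x ∈ 𝒜 c)
    (hst : x = s * t) (hst' : ψ x = ψ s * ψ t) (z : Away 𝒜 s) :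
    h.awayEquiv hx (awayMap 𝒜 ht hst z) =
      awayMap ℬ (h.map_mem ht) hst' (h.awayEquiv hs z) := by
  obtain ⟨n, a, ha, rfl⟩ := Away.mk_surjective 𝒜 hs z
  have : h.awayEquiv hs (Away.mk 𝒜 hs n a ha) = Away.mk ℬ (h.map_mem hs) n (ψ a)
      (by convert h.map_mem ha using 2; simp; ring) := by
    ext
    exact (h.val_awayHom_mk hs n a ha).trans (Away.val_mk ..).symm
  rw [this, awayMap_mk, awayMap_mk]
  ext
  refine (h.val_awayHom_mk (hst ▸ SetLike.mul_mem_graded hs ht) _ _ _).trans ?_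
  simp [Away.val_mk]

lemma awayEquiv_symm_awayMap {c d e : ℕ} {s t x : A} (hs : s ∈ 𝒜 d) (ht : t ∈ 𝒜 e)
    (hx : x ∈ 𝒜 c) (hst : x = s * t) (hst' : ψ x = ψ s * ψ t) (z : Away ℬ (ψ s)) :
    (h.awayEquiv hx).symm (awayMap ℬ (h.map_mem ht) hst' z) =
      awayMap 𝒜 ht hst ((h.awayEquiv hs).symm z) := by
  rw [RingEquiv.symm_apply_eq, h.awayEquiv_awayMap hs ht hx hst hst', RingEquiv.apply_symm_apply]

/-- The open immersion `D₊(s) ≅ D₊(ψ s) ⊆ Proj B`. -/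
noncomputable def localInv {d : ℕ} {s : A} (hs : s ∈ 𝒜 d) (hd : 0 < d) :
    Spec (.of (Away 𝒜 s)) ⟶ Proj ℬ :=
  Spec.map (CommRingCat.ofHom (h.awayEquiv hs).symm.toRingHom) ≫
    Proj.awayι ℬ (ψ s) (h.map_mem hs) (Nat.mul_pos h.pos hd)

/-- The open immersion `D₊(ψ s) ≅ D₊(s) ⊆ Proj A`. -/
noncomputable def localHom {d : ℕ} {s : A} (hs : s ∈ 𝒜 d) (hd : 0 < d) :
    Spec (.of (Away ℬ (ψ s))) ⟶ Proj 𝒜 :=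
  Spec.map (CommRingCat.ofHom (h.awayEquiv hs).toRingHom) ≫ Proj.awayι 𝒜 s hs hd

lemma awayMap_localInv {c d e : ℕ} {s t x : A} (hs : s ∈ 𝒜 d) (hd : 0 < d) (ht : t ∈ 𝒜 e)
    (hx : x ∈ 𝒜 c) (hc : 0 < c) (hst : x = s * t) :
    Spec.map (CommRingCat.ofHom (awayMap 𝒜 ht hst)) ≫ h.localInv hs hd = h.localInv hx hc := by
  have hst' : ψ x = ψ s * ψ t := by rw [hst, map_mul]
  rw [localInv, localInv]
  have := Proj.SpecMap_awayMap_awayι ℬ (h.map_mem hs) (Nat.mul_pos h.pos hd) (h.map_mem ht) hst'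
  trans Spec.map (CommRingCat.ofHom (h.awayEquiv hx).symm.toRingHom) ≫
      Proj.awayι ℬ (ψ x) (hst' ▸ SetLike.mul_mem_graded (h.map_mem hs) (h.map_mem ht))
        ((Nat.mul_pos h.pos hd).trans_le (Nat.le_add_right _ _))
  · rw [← this, ← Category.assoc, ← Category.assoc, ← Spec.map_comp, ← Spec.map_comp]
    congr 2
    exact CommRingCat.hom_ext <| RingHom.ext fun z ↦
      (h.awayEquiv_symm_awayMap hs ht hx hst hst' z).symm
  · rfl

lemma awayMap_localHom {c d e : ℕ} {s t x : A} (hs : s ∈ 𝒜 d) (hd : 0 < d) (ht : t ∈ 𝒜 e)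
    (hx : x ∈ 𝒜 c) (hc : 0 < c) (hst : x = s * t) (hst' : ψ x = ψ s * ψ t) :
    Spec.map (CommRingCat.ofHom (awayMap ℬ (h.map_mem ht) hst')) ≫ h.localHom hs hd =
      h.localHom hx hc := by
  rw [localHom, localHom]
  trans Spec.map (CommRingCat.ofHom (h.awayEquiv hx).toRingHom) ≫
      Proj.awayι 𝒜 x (hst ▸ SetLike.mul_mem_graded hs ht) (hd.trans_le (Nat.le_add_right _ _))
  · rw [← Proj.SpecMap_awayMap_awayι 𝒜 hs hd ht hst, ← Category.assoc, ← Category.assoc,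
      ← Spec.map_comp, ← Spec.map_comp]
    congr 2
    exact CommRingCat.hom_ext <| RingHom.ext fun z ↦
      (h.awayEquiv_awayMap hs ht hx hst hst' z).symm
  · rfl

set_option linter.unusedSectionVars false in
/-- The opens `D₊(ψ s)`, with `s` homogeneous of positive degree, cover `Proj B`: any `D₊(t)` equals
`D₊(t ^ L)`, and `t ^ L` is in the image of `ψ`. -/
lemma exists_mem_basicOpen (h : IsVeroneseEmbedding 𝒜 ℬ L ψ) (x : Proj ℬ) :
    ∃ s : Σ i : PNat, 𝒜 i, x ∈ Proj.basicOpen ℬ (ψ s.2) := by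
  obtain ⟨⟨d, t⟩, hy⟩ : ∃ t : Σ i : PNat, ℬ i, x ∈ Proj.basicOpen ℬ (t.2 : B) := by
    refine ⟨(Proj.affineOpenCover ℬ).idx x, ?_⟩
    rw [← Proj.opensRange_awayι ℬ _ (SetLike.coe_mem _) (PNat.pos _)]
    exact (Proj.affineOpenCover ℬ).covers x
  obtain ⟨a, ha, hat⟩ := h.exists_of_mem (i := d) (b := (t : B) ^ L)
    (by simpa using SetLike.pow_mem_graded L t.2)
  refine ⟨⟨d, a, ha⟩, ?_⟩
  dsimp only
  rwa [hat, Proj.basicOpen_pow _ _ _ h.pos]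

/-- The open cover of `Proj B` by the `D₊(ψ s)`, for `s` homogeneous of positive degree. -/
noncomputable def openCover : (Proj ℬ).OpenCover :=
  Scheme.AffineOpenCover.openCover
  { I₀ := Σ i : PNat, 𝒜 i
    X s := .of (Away ℬ (ψ s.2))
    f s := Proj.awayι ℬ (ψ s.2) (h.map_mem s.2.2) (Nat.mul_pos h.pos s.1.pos)
    idx x := (h.exists_mem_basicOpen x).choose
    covers x := by
      change x ∈ (Proj.awayι ℬ _ _ _).opensRange
      rw [Proj.opensRange_awayι]
      exact (h.exists_mem_basicOpen x).choose_spec }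

/-- The maps `localInv` agree on `D₊(s) ∩ D₊(t) = D₊(s * t)`. -/
lemma localInv_compat (s t : Σ i : PNat, 𝒜 i) :
    Limits.pullback.fst (Proj.awayι 𝒜 s.2.1 s.2.2 s.1.pos) (Proj.awayι 𝒜 t.2.1 t.2.2 t.1.pos) ≫
        h.localInv s.2.2 s.1.pos =
      Limits.pullback.snd (Proj.awayι 𝒜 s.2.1 s.2.2 s.1.pos) (Proj.awayι 𝒜 t.2.1 t.2.2 t.1.pos) ≫
        h.localInv t.2.2 t.1.pos := by
  have hst := SetLike.mul_mem_graded s.2.2 t.2.2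
  have h0 : 0 < (s.1 + t.1 : ℕ) := Nat.add_pos_left s.1.pos _
  rw [← cancel_epi (Proj.pullbackAwayιIso 𝒜 s.2.2 s.1.pos t.2.2 t.1.pos rfl).inv,
    Proj.pullbackAwayιIso_inv_fst_assoc, Proj.pullbackAwayιIso_inv_snd_assoc,
    h.awayMap_localInv s.2.2 s.1.pos t.2.2 hst h0 rfl,
    h.awayMap_localInv t.2.2 t.1.pos s.2.2 hst h0 (mul_comm _ _)]

/-- The maps `localHom` agree on `D₊(ψ s) ∩ D₊(ψ t) = D₊(ψ (s * t))`. -/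
lemma localHom_compat (s t : Σ i : PNat, 𝒜 i) :
    Limits.pullback.fst (Proj.awayι ℬ (ψ s.2) (h.map_mem s.2.2) (Nat.mul_pos h.pos s.1.pos))
          (Proj.awayι ℬ (ψ t.2) (h.map_mem t.2.2) (Nat.mul_pos h.pos t.1.pos)) ≫
        h.localHom s.2.2 s.1.pos =
      Limits.pullback.snd (Proj.awayι ℬ (ψ s.2) (h.map_mem s.2.2) (Nat.mul_pos h.pos s.1.pos))
          (Proj.awayι ℬ (ψ t.2) (h.map_mem t.2.2) (Nat.mul_pos h.pos t.1.pos)) ≫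
        h.localHom t.2.2 t.1.pos := by
  have hst := SetLike.mul_mem_graded s.2.2 t.2.2
  have h0 : 0 < (s.1 + t.1 : ℕ) := Nat.add_pos_left s.1.pos _
  have hψ := map_mul ψ s.2.1 t.2.1
  rw [← cancel_epi (Proj.pullbackAwayιIso ℬ (h.map_mem s.2.2) (Nat.mul_pos h.pos s.1.pos)
      (h.map_mem t.2.2) (Nat.mul_pos h.pos t.1.pos) hψ).inv,
    Proj.pullbackAwayιIso_inv_fst_assoc, Proj.pullbackAwayιIso_inv_snd_assoc,
    h.awayMap_localHom s.2.2 s.1.pos t.2.2 hst h0 rfl hψ,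
    h.awayMap_localHom t.2.2 t.1.pos s.2.2 hst h0 (mul_comm _ _) (hψ.trans (mul_comm _ _))]

/-- The morphism `Proj A ⟶ Proj B` glued from the isomorphisms `D₊(s) ≅ D₊(ψ s)`. -/
noncomputable def fromProj : Proj 𝒜 ⟶ Proj ℬ :=
  (Proj.affineOpenCover 𝒜).openCover.glueMorphisms (fun s ↦ h.localInv s.2.2 s.1.pos)
    h.localInv_compat

/-- The morphism `Proj B ⟶ Proj A` glued from the isomorphisms `D₊(ψ s) ≅ D₊(s)`. -/
noncomputable def toProj : Proj ℬ ⟶ Proj 𝒜 :=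
  h.openCover.glueMorphisms (fun s ↦ h.localHom s.2.2 s.1.pos) h.localHom_compat

lemma awayι_fromProj (s : Σ i : PNat, 𝒜 i) :
    Proj.awayι 𝒜 s.2.1 s.2.2 s.1.pos ≫ h.fromProj = h.localInv s.2.2 s.1.pos :=
  (Proj.affineOpenCover 𝒜).openCover.ι_glueMorphisms _ _ s

lemma awayι_toProj (s : Σ i : PNat, 𝒜 i) :
    Proj.awayι ℬ (ψ s.2) (h.map_mem s.2.2) (Nat.mul_pos h.pos s.1.pos) ≫ h.toProj =
      h.localHom s.2.2 s.1.pos :=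
  h.openCover.ι_glueMorphisms _ _ s

lemma awayι_toProj_fromProj (s : Σ i : PNat, 𝒜 i) :
    Proj.awayι ℬ (ψ s.2) (h.map_mem s.2.2) (Nat.mul_pos h.pos s.1.pos) ≫ h.toProj ≫ h.fromProj =
      Proj.awayι ℬ (ψ s.2) (h.map_mem s.2.2) (Nat.mul_pos h.pos s.1.pos) := by
  rw [← Category.assoc, awayι_toProj, localHom, Category.assoc, awayι_fromProj, localInv,
    ← Category.assoc, ← Spec.map_comp, ← CommRingCat.ofHom_comp]
  simp

lemma awayι_fromProj_toProj (s : Σ i : PNat, 𝒜 i) :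
    Proj.awayι 𝒜 s.2.1 s.2.2 s.1.pos ≫ h.fromProj ≫ h.toProj =
      Proj.awayι 𝒜 s.2.1 s.2.2 s.1.pos := by
  rw [← Category.assoc, awayι_fromProj, localInv, Category.assoc, awayι_toProj, localHom,
    ← Category.assoc, ← Spec.map_comp, ← CommRingCat.ofHom_comp]
  simp

/-- `Proj` of a graded ring is isomorphic to `Proj` of its `L`-th Veronese subring. -/
noncomputable def projIso : Proj ℬ ≅ Proj 𝒜 where
  hom := h.toProj
  inv := h.fromProj
  hom_inv_id := h.openCover.hom_ext _ _ fun s ↦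
    (h.awayι_toProj_fromProj s).trans (Category.comp_id _).symm
  inv_hom_id := (Proj.affineOpenCover 𝒜).openCover.hom_ext _ _ fun s ↦
    (h.awayι_fromProj_toProj s).trans (Category.comp_id _).symm

end IsVeroneseEmbedding
end Veronese

/-! ### The Veronese subring of a weighted polynomial ring in two variables -/

section poly

variable (k : Type*) [Field k]

/-- The substitution `X 0 ↦ X 0 ^ a`, `X 1 ↦ X 1 ^ b` on `k[X 0, X 1]`. -/
noncomputable def powHom (a b : ℕ) : MvPolynomial (Fin 2) k →+* MvPolynomial (Fin 2) k :=
  (aeval ![X 0 ^ a, X 1 ^ b] : MvPolynomial (Fin 2) k →ₐ[k] MvPolynomial (Fin 2) k)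

/-- The effect of `powHom k a b` on exponents of monomials: `(i, j) ↦ (a * i, b * j)`. -/
noncomputable def expMap (a b : ℕ) (d : Fin 2 →₀ ℕ) : Fin 2 →₀ ℕ :=
  Finsupp.equivFunOnFinite.symm ![a * d 0, b * d 1]

lemma powHom_monomial (a b : ℕ) (d : Fin 2 →₀ ℕ) (c : k) :
    powHom k a b (monomial d c) = monomial (expMap a b d) c := by
  change aeval ![X 0 ^ a, X 1 ^ b] (monomial d c) = _
  rw [monomial_eq (s := expMap a b d), aeval_monomial]
  simp [expMap, Finsupp.prod_fintype, Fin.prod_univ_two, pow_mul, algebraMap_eq]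

lemma expMap_injective {a b : ℕ} (ha : 0 < a) (hb : 0 < b) : Function.Injective (expMap a b) := by
  intro d e h
  have h0 := DFunLike.congr_fun h 0
  have h1 := DFunLike.congr_fun h 1
  simp [expMap, ha.ne', hb.ne'] at h0 h1
  ext i
  fin_cases i <;> assumption

lemma powHom_injective {a b : ℕ} (ha : 0 < a) (hb : 0 < b) :
    Function.Injective (powHom k a b) := by
  have key (p : MvPolynomial (Fin 2) k) (d) : coeff (expMap a b d) (powHom k a b p) = coeff d p := by
    induction p using MvPolynomial.induction_on' with
    | monomial e c =>
      simp [powHom_monomial, coeff_monomial, (expMap_injective ha hb).eq_iff]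
    | add p q hp hq => simp [hp, hq]
  intro p q hpq
  ext d
  rw [← key, hpq, key]

/-- The `L`-th Veronese subring of `k[X 0, X 1]` with weights `(m, n)`, where `L = lcm m n`, is the
polynomial ring on `X 0 ^ (L / m)` and `X 1 ^ (L / n)`. -/
theorem isVeroneseEmbedding_powHom {m n : ℕ} (hm : 1 ≤ m) (hn : 1 ≤ n) :
    IsVeroneseEmbedding (weightedHomogeneousSubmodule k (![1, 1] : Fin 2 → ℕ))
      (weightedHomogeneousSubmodule k (![m, n] : Fin 2 → ℕ)) (m.lcm n)
      (powHom k (m.lcm n / m) (m.lcm n / n)) where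
  pos := Nat.lcm_pos hm hn
  injective := powHom_injective k
    (Nat.div_pos (Nat.le_of_dvd (Nat.lcm_pos hm hn) (Nat.dvd_lcm_left ..)) hm)
    (Nat.div_pos (Nat.le_of_dvd (Nat.lcm_pos hm hn) (Nat.dvd_lcm_right ..)) hn)
  map_mem {i p} hp := by
    rw [p.as_sum, map_sum]
    refine sum_mem fun d hd ↦ ?_
    rw [powHom_monomial]
    refine isWeightedHomogeneous_monomial _ _ _ ?_
    rw [← hp (mem_support_iff.1 hd)]
    have h0 := Nat.mul_div_cancel' (Nat.dvd_lcm_left m n)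
    have h1 := Nat.mul_div_cancel' (Nat.dvd_lcm_right m n)
    simp [expMap, Finsupp.weight_apply, Finsupp.sum_fintype]
    linear_combination d 0 * h0 + d 1 * h1
  exists_of_mem {K p} hp := by
    have h0 := Nat.mul_div_cancel' (Nat.dvd_lcm_left m n)
    have h1 := Nat.mul_div_cancel' (Nat.dvd_lcm_right m n)
    -- Every monomial of `p` is the image of a monomial of degree `K`.
    have key (d : Fin 2 →₀ ℕ) (hd : d ∈ p.support) :
        ∃ e : Fin 2 →₀ ℕ, expMap (m.lcm n / m) (m.lcm n / n) e = d ∧ e 0 + e 1 = K := by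
      have hw : d 0 * m + d 1 * n = m.lcm n * K := by
        simpa [Finsupp.weight_apply, Finsupp.sum_fintype] using hp (mem_support_iff.1 hd)
      -- `d 0 * m` is a multiple of `m`, and of `n` because `d 1 * n` and the sum are.
      obtain ⟨i, hi⟩ : m.lcm n ∣ d 0 * m := Nat.lcm_dvd (Dvd.intro_left _ rfl) <|
        (Nat.dvd_add_left (Dvd.intro_left _ rfl)).1 (hw ▸ (Nat.dvd_lcm_right m n).mul_right K)
      obtain ⟨j, hj⟩ : m.lcm n ∣ d 1 * n := Nat.lcm_dvd ((Nat.dvd_add_right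
        (Dvd.intro_left _ rfl)).1 (hw ▸ (Nat.dvd_lcm_left m n).mul_right K)) (Dvd.intro_left _ rfl)
      refine ⟨Finsupp.equivFunOnFinite.symm ![i, j], ?_, ?_⟩
      · ext l
        fin_cases l
        · refine Nat.eq_of_mul_eq_mul_right hm ?_
          change m.lcm n / m * i * m = d 0 * m
          linear_combination i * h0 - hi
        · refine Nat.eq_of_mul_eq_mul_right hn ?_
          change m.lcm n / n * j * n = d 1 * n
          linear_combination j * h1 - hj
      · refine Nat.eq_of_mul_eq_mul_left (Nat.lcm_pos hm hn) ?_
        change m.lcm n * (i + j) = m.lcm n * K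
        linear_combination hw - hi - hj
    choose! e he using key
    refine ⟨∑ d ∈ p.support, monomial (e d) (coeff d p), sum_mem fun d hd ↦ ?_, ?_⟩
    · refine isWeightedHomogeneous_monomial _ _ _ ?_
      simpa [Finsupp.weight_apply, Finsupp.sum_fintype] using (he d hd).2
    · conv_rhs => rw [p.as_sum]
      rw [map_sum]
      exact Finset.sum_congr rfl fun d hd ↦ by rw [powHom_monomial, (he d hd).1]

end poly

/-- For `m, n ≥ 1`, the weighted projective line
`ℙ(m,n) = Proj k[x,y]` (with `x` of degree `m`, `y` of degree `n`) is isomorphic, as a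
scheme, to the projective line `ℙ¹ = Proj k[x,y]` with the standard grading. -/
theorem stmt14 {k : Type*} [Field k] (m n : ℕ) (hm : 1 ≤ m) (hn : 1 ≤ n) :
    Nonempty
      ((Proj (weightedHomogeneousSubmodule k (![m, n] : Fin 2 → ℕ)) : Scheme) ≅
        (Proj (weightedHomogeneousSubmodule k (![1, 1] : Fin 2 → ℕ)) : Scheme)) :=
  ⟨(isVeroneseEmbedding_powHom k hm hn).projIso⟩
end

section
/- Let k be a field of characteristic zero and consider the polynomial ring k[g₂,g₃,h₂,h₃]. Let T be the set of polynomials p satisfying: (1) p(g₂,g₃,h₂,h₃) = p(h₂,h₃,g₂,g₃), and (2) p is a k-linear combination of monomials g₂^α g₃^β h₂^γ h₃^δ with 2α + 3β = 2γ + 3δ (equivalently p(t²g₂, t³g₃, u²h₂, u³h₃) = (tu)^N p on each component). Then T is a k-subalgebra and is generated as a k-algebra by the three elements g₂h₂, g₃h₃, and g₂³h₃² + g₃²h₂³. -/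
/-!
The weight condition `2α + 3β = 2γ + 3δ` forces `α - γ = 3s` and `δ - β = 2s` for an integer `s`, so
with `a = g₂h₂`, `b = g₃h₃`, `A = g₂³h₃²`, `B = g₃²h₂³` every admissible monomial is
`a ^ i * b ^ j * A ^ s` or `a ^ i * b ^ j * B ^ s` with `s ≥ 0`. The swap fixes `a` and `b` and
exchanges `A` and `B`. Averaging over the swap (`2` is invertible), `T` is spanned by the elements
`a ^ i * b ^ j * (A ^ s + B ^ s)`. As `A * B = a ^ 3 * b ^ 2`, the power sums `A ^ s + B ^ s`
are polynomials in `A + B`, `a` and `b` by Newton's recurrence (`pow_add_pow_mem`).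
Conversely, both conditions defining `T` are closed under the algebra operations and hold for the
three generators.
-/

open MvPolynomial

/-- A subalgebra containing `x + y` and `x * y` contains all power sums `x ^ n + y ^ n`. -/
lemma pow_add_pow_mem {k R : Type*} [CommRing k] [CommRing R] [Algebra k R] (S : Subalgebra k R)
    {x y : R} (hs : x + y ∈ S) (hp : x * y ∈ S) (n : ℕ) : x ^ n + y ^ n ∈ S := by
  induction n using Nat.twoStepInduction with
  | zero => simpa using S.add_mem S.one_mem S.one_mem
  | one => simpa using hs
  | more n h0 h1 =>
    have : x ^ (n + 2) + y ^ (n + 2)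
        = (x + y) * (x ^ (n + 1) + y ^ (n + 1)) - (x * y) * (x ^ n + y ^ n) := by ring
    rw [this]
    exact S.sub_mem (S.mul_mem hs h1) (S.mul_mem hp h0)

/-- The symmetrization of a monomial satisfying the weight condition lies in the subalgebra. -/
lemma monomial_add_swap_mem {k : Type*} [Field k] (a b c d : ℕ)
    (h : 2 * a + 3 * b = 2 * c + 3 * d) :
    (X 0 ^ a * X 1 ^ b * X 2 ^ c * X 3 ^ d + X 2 ^ a * X 3 ^ b * X 0 ^ c * X 1 ^ d :
      MvPolynomial (Fin 4) k) ∈ Algebra.adjoin k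
      ({X 0 * X 2, X 1 * X 3, X 0 ^ 3 * X 3 ^ 2 + X 1 ^ 2 * X 2 ^ 3} :
        Set (MvPolynomial (Fin 4) k)) := by
  set S := Algebra.adjoin k ({X 0 * X 2, X 1 * X 3, X 0 ^ 3 * X 3 ^ 2 + X 1 ^ 2 * X 2 ^ 3} :
        Set (MvPolynomial (Fin 4) k)) with hS
  have h1 : (X 0 * X 2 : MvPolynomial (Fin 4) k) ∈ S := Algebra.subset_adjoin (by simp)
  have h2 : (X 1 * X 3 : MvPolynomial (Fin 4) k) ∈ S := Algebra.subset_adjoin (by simp)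
  have h3 : (X 0 ^ 3 * X 3 ^ 2 + X 1 ^ 2 * X 2 ^ 3 : MvPolynomial (Fin 4) k) ∈ S :=
    Algebra.subset_adjoin (by simp)
  have h4 : (X 0 ^ 3 * X 3 ^ 2 * (X 1 ^ 2 * X 2 ^ 3) : MvPolynomial (Fin 4) k) ∈ S := by
    have : (X 0 ^ 3 * X 3 ^ 2 * (X 1 ^ 2 * X 2 ^ 3) : MvPolynomial (Fin 4) k)
        = (X 0 * X 2) ^ 3 * (X 1 * X 3) ^ 2 := by ring
    rw [this]
    exact S.mul_mem (S.pow_mem h1 _) (S.pow_mem h2 _)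
  have key (i j s : ℕ) := S.mul_mem (S.mul_mem (S.pow_mem h1 i) (S.pow_mem h2 j))
    (pow_add_pow_mem S h3 h4 s)
  rcases le_total c a with hca | hca
  · obtain ⟨s, rfl, rfl⟩ : ∃ s, a = c + 3 * s ∧ d = b + 2 * s :=
      ⟨(a - c) / 3, by omega, by omega⟩
    convert key c b s using 1
    ring
  · obtain ⟨s, rfl, rfl⟩ : ∃ s, c = a + 3 * s ∧ b = d + 2 * s :=
      ⟨(c - a) / 3, by omega, by omega⟩
    convert key a d s using 1
    ring

/-- In `k[g₂,g₃,h₂,h₃]` (variables `0 ↦ g₂, 1 ↦ g₃, 2 ↦ h₂, 3 ↦ h₃`),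
the set `T` of polynomials that are symmetric under the swap
`(g₂,g₃,h₂,h₃) ↦ (h₂,h₃,g₂,g₃)` and supported on monomials `g₂^α g₃^β h₂^γ h₃^δ` with
`2α + 3β = 2γ + 3δ` is exactly the `k`-subalgebra generated by `g₂h₂`, `g₃h₃` and
`g₂³h₃² + g₃²h₂³`. -/
theorem stmt15 {k : Type*} [Field k] [CharZero k] (p : MvPolynomial (Fin 4) k) :
    (rename (fun i : Fin 4 => (![2, 3, 0, 1] : Fin 4 → Fin 4) i) p = p ∧
      ∀ m ∈ p.support, 2 * m 0 + 3 * m 1 = 2 * m 2 + 3 * m 3) ↔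
    p ∈ Algebra.adjoin k
      ({X 0 * X 2, X 1 * X 3, X 0 ^ 3 * X 3 ^ 2 + X 1 ^ 2 * X 2 ^ 3} :
        Set (MvPolynomial (Fin 4) k)) := by
  classical
  constructor
  · rintro ⟨hsym, hsupp⟩
    have hp : p = (2⁻¹ : k) •
        (p + rename (fun i : Fin 4 => (![2, 3, 0, 1] : Fin 4 → Fin 4) i) p) := by
      rw [hsym, ← two_smul k p, smul_smul, inv_mul_cancel₀ two_ne_zero, one_smul]
    rw [hp]
    refine Subalgebra.smul_mem _ ?_ _
    have hsum : p + rename (fun i : Fin 4 => (![2, 3, 0, 1] : Fin 4 → Fin 4) i) p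
        = ∑ m ∈ p.support, p.coeff m •
          (X 0 ^ m 0 * X 1 ^ m 1 * X 2 ^ m 2 * X 3 ^ m 3 +
            X 2 ^ m 0 * X 3 ^ m 1 * X 0 ^ m 2 * X 1 ^ m 3 : MvPolynomial (Fin 4) k) := by
      conv_lhs => rw [p.as_sum]
      rw [map_sum, ← Finset.sum_add_distrib]
      refine Finset.sum_congr rfl fun m _ => ?_
      rw [monomial_eq, Finsupp.prod_fintype _ _ (fun i => pow_zero _)]
      simp [Fin.prod_univ_four, smul_eq_C_mul]
    rw [hsum]
    exact Subalgebra.sum_mem _ fun m hm =>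
      Subalgebra.smul_mem _ (monomial_add_swap_mem _ _ _ _ (hsupp m hm)) _
  · intro hp
    induction hp using Algebra.adjoin_induction with
    | mem x hx =>
      have hX (a b c d : ℕ) (m : Fin 4 →₀ ℕ)
          (hm : m ∈ (X 0 ^ a * X 1 ^ b * X 2 ^ c * X 3 ^ d : MvPolynomial (Fin 4) k).support) :
          m 0 = a ∧ m 1 = b ∧ m 2 = c ∧ m 3 = d := by
        simp only [X_pow_eq_monomial, monomial_mul] at hm
        have := Finset.mem_singleton.1 (support_monomial_subset hm)
        subst this
        simp
      rcases hx with rfl | rfl | rfl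
      · refine ⟨by simp [mul_comm], fun m hm => ?_⟩
        have := hX 1 0 1 0 m (by simpa using hm)
        omega
      · refine ⟨by simp [mul_comm], fun m hm => ?_⟩
        have := hX 0 1 0 1 m (by simpa using hm)
        omega
      · refine ⟨by simp; ring, fun m hm => ?_⟩
        rcases Finset.mem_union.1 (support_add hm) with hm | hm
        · have := hX 3 0 0 2 m (by simpa using hm)
          omega
        · have := hX 0 2 3 0 m (by simpa using hm)
          omega
    | algebraMap r =>
      refine ⟨by simp [algebraMap_eq], fun m hm => ?_⟩
      rw [algebraMap_eq, C_apply] at hm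
      have := Finset.mem_singleton.1 (support_monomial_subset hm)
      simp [this]
    | add x y _ _ hx hy =>
      refine ⟨by rw [map_add, hx.1, hy.1], fun m hm => ?_⟩
      rcases Finset.mem_union.1 (support_add hm) with hm | hm
      · exact hx.2 m hm
      · exact hy.2 m hm
    | mul x y _ _ hx hy =>
      refine ⟨by rw [map_mul, hx.1, hy.1], fun m hm => ?_⟩
      obtain ⟨u, hu, v, hv, rfl⟩ := Finset.mem_add.1 (support_mul x y hm)
      have h1 := hx.2 u hu
      have h2 := hy.2 v hv
      simp only [Finsupp.add_apply]
      omega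
end

section
/- Let k be a field of characteristic zero. The three polynomials g₂h₂, g₃h₃, and g₂³h₃² + g₃²h₂³ in k[g₂,g₃,h₂,h₃] are algebraically independent over k. Consequently the k-subalgebra they generate is a polynomial ring in three variables of weights 4, 6, 12, and its Proj is the weighted projective plane ℙ(4,6,12) ≅ ℙ(2,3,6). -/
open MvPolynomial

/-!
The morphism `𝔸⁴ → 𝔸³` given by the three polynomials hits, over an algebraic closure of `k`, every
point `(a, b, c)` with `a ≠ 0` and `b ≠ 0` (`exists_preimage`). A polynomial relation `p` therefore
vanishes wherever the first two coordinates are nonzero, so `p * X 0 * X 1` vanishes at every point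
over an infinite field, and `p = 0`.
-/

/-- On the slice `h₃ = 1`, with `h₂ = t`, the first two equations force `g₂ = a / t` and `g₃ = b`.
The third becomes `b² t⁶ - c t³ + a³ = 0`, a quadratic in `t³` whose roots are nonzero
since `a ≠ 0`. -/
lemma exists_preimage {K : Type*} [Field K] [CharZero K] [IsAlgClosed K] {a b : K} (c : K)
    (ha : a ≠ 0) (hb : b ≠ 0) :
    ∃ x : Fin 4 → K, x 0 * x 2 = a ∧ x 1 * x 3 = b ∧
      x 0 ^ 3 * x 3 ^ 2 + x 1 ^ 2 * x 2 ^ 3 = c := by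
  obtain ⟨d, hd⟩ := IsAlgClosed.exists_pow_nat_eq (c ^ 2 - 4 * a ^ 3 * b ^ 2) (n := 2) (by norm_num)
  obtain ⟨t, ht⟩ := IsAlgClosed.exists_pow_nat_eq ((c + d) / (2 * b ^ 2)) (n := 3) (by norm_num)
  have hq : b ^ 2 * (t ^ 3) ^ 2 - c * t ^ 3 + a ^ 3 = 0 := by
    rw [ht]
    field_simp
    linear_combination hd
  have ht0 : t ≠ 0 := by
    rintro rfl
    apply ha
    simpa using hq
  refine ⟨![a / t, b, t, 1], ?_, ?_, ?_⟩
  · simp [ht0]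
  · simp
  · simp only [Matrix.cons_val]
    field_simp
    linear_combination hq

/-- The three polynomials `g₂h₂`, `g₃h₃` and `g₂³h₃² + g₃²h₂³` in
`k[g₂,g₃,h₂,h₃]` (variables `0 ↦ g₂, 1 ↦ g₃, 2 ↦ h₂, 3 ↦ h₃`) are algebraically
independent over `k`; hence the subalgebra they generate is a polynomial ring in three
variables (of weights 4, 6, 12). -/
theorem stmt16 {k : Type*} [Field k] [CharZero k] :
    AlgebraicIndependent k
      ![(X 0 : MvPolynomial (Fin 4) k) * X 2, X 1 * X 3,
        X 0 ^ 3 * X 3 ^ 2 + X 1 ^ 2 * X 2 ^ 3] := by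
  rw [algebraicIndependent_iff]
  intro p hp
  let K := AlgebraicClosure k
  have : CharZero K := charZero_of_injective_algebraMap (algebraMap k K).injective
  have hvan : ∀ y : Fin 3 → K, y 0 ≠ 0 → y 1 ≠ 0 → aeval y p = 0 := by
    intro y h0 h1
    obtain ⟨x, hx0, hx1, hx2⟩ := exists_preimage (y 2) h0 h1
    have h := congrArg (aeval x) hp
    rw [map_zero, ← AlgHom.comp_apply, comp_aeval] at h
    have hy : (fun i => aeval x ((![X 0 * X 2, X 1 * X 3,
        X 0 ^ 3 * X 3 ^ 2 + X 1 ^ 2 * X 2 ^ 3] : Fin 3 → MvPolynomial (Fin 4) k) i)) = y := by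
      funext i
      fin_cases i <;> simp [hx0, hx1, hx2]
    rw [← hy]
    exact h
  have hz : map (algebraMap k K) p * X 0 * X 1 = 0 := by
    refine MvPolynomial.funext fun y => ?_
    by_cases h0 : y 0 = 0
    · simp [h0]
    by_cases h1 : y 1 = 0
    · simp [h1]
    have h := hvan y h0 h1
    rw [aeval_def, ← eval_map] at h
    simp [h]
  have hmap : map (algebraMap k K) p = 0 := by
    simpa [X_ne_zero] using hz
  exact map_injective _ (algebraMap k K).injective (by rw [hmap, map_zero])
end

section
/- Let F = x⁶ + y⁶ ∈ ℂ[x,y] and let H ≤ GL₂(ℂ) be the subgroup of matrices M = (m_ij) for which the substituted form F(x m₁₁ + y m₂₁, x m₁₂ + y m₂₂) is a nonzero scalar multiple of F. Then H contains the scalar matrices ℂˣ·I, and the quotient group H/(ℂˣ·I) is isomorphic to the dihedral group of order 12. In particular the binary sextic x⁶ + y⁶ admits four distinct involutions, represented by [x,y] ↦ [y,x], [x,y] ↦ [−x,y], [x,y] ↦ [ζ⁴y, x] and [x,y] ↦ [ζ⁸y, x], where ζ is a primitive 12th root of unity. -/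
/-!
A matrix `M = !![a, b; c, d]` turns `x⁶ + y⁶` into `(a x + c y)⁶ + (b x + d y)⁶`. Comparing the
coefficients of `x⁵y` and `x⁴y²` gives `a⁵c + b⁵d = 0` and `a⁴c² + b⁴d² = 0`; eliminating between
these two yields `a⁴c · det M = 0 = b⁴d · det M`, so an invertible `M` in `H` is diagonal or
antidiagonal, and the ratio of its two nonzero entries is then a sixth root of unity
(`stab_iff`).

Fix a primitive sixth root of unity `ω` and let `dlog` be the discrete logarithm
`μ₆ → ℤ/6` with base `ω`. Sending `diag(a, d)` to the rotation `r (dlog (d / a))` and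
`antidiag(b, c)` to the reflection `sr (dlog (b / c))` is multiplicative, is onto already on
`diag(1, ω ^ k)` and `antidiag(ω ^ k, 1)`, and is trivial exactly when `b = c = 0` and `a = d`.
-/

open MvPolynomial

/-- The group homomorphism `ℂˣ → GL₂(ℂ)` sending a scalar to the corresponding scalar
matrix. -/
noncomputable def scalarGL : ℂˣ →* GL (Fin 2) ℂ :=
  Units.map (algebraMap ℂ (Matrix (Fin 2) (Fin 2) ℂ)).toMonoidHom

/-- Over `ℂ`, the form `(a x + c y)⁶ + (b x + d y)⁶` with `ad - bc ≠ 0` is a nonzero multiple of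
`x⁶ + y⁶` exactly when the matrix is diagonal or antidiagonal with entries of equal sixth power. -/
lemma stab_iff (a b c d : ℂ) (hdet : a * d - b * c ≠ 0) :
    (∃ l : ℂˣ, substAct !![a, b; c, d] (X 0 ^ 6 + X 1 ^ 6) =
        (l : ℂ) • ((X 0 : MvPolynomial (Fin 2) ℂ) ^ 6 + X 1 ^ 6)) ↔
      (b = 0 ∧ c = 0 ∧ a ^ 6 = d ^ 6) ∨ (a = 0 ∧ d = 0 ∧ b ^ 6 = c ^ 6) := by
  constructor
  · rintro ⟨l, hl⟩
    have ev : ∀ s t : ℂ, (a * s + c * t) ^ 6 + (b * s + d * t) ^ 6 = l * (s ^ 6 + t ^ 6) := by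
      intro s t
      have := congrArg (eval ![s, t]) hl
      simp [substAct, smul_eq_C_mul] at this
      linear_combination this
    -- The low coefficients in `t` are recovered from the values at `t = 0, ±1, ±2, ±3` by
    -- the central difference formulas for the first and second derivative at `0`,
    -- which are exact in degree six.
    have h1 : a ^ 5 * c + b ^ 5 * d = 0 := by
      linear_combination (1 / 6) * ((3 / 4) * (ev 1 1 - ev 1 (-1))
        - (3 / 20) * (ev 1 2 - ev 1 (-2)) + (1 / 60) * (ev 1 3 - ev 1 (-3)))
    have h2 : a ^ 4 * c ^ 2 + b ^ 4 * d ^ 2 = 0 := by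
      linear_combination (1 / 5400) * (2 * (ev 1 3 + ev 1 (-3)) - 27 * (ev 1 2 + ev 1 (-2))
        + 270 * (ev 1 1 + ev 1 (-1)) - 490 * ev 1 0)
    have h3 : a ^ 6 + b ^ 6 = c ^ 6 + d ^ 6 := by
      linear_combination ev 1 0 - ev 0 1
    have hac : a ^ 4 * c = 0 := by
      have : a ^ 4 * c * (a * d - b * c) = 0 := by linear_combination d * h1 - b * h2
      simpa [hdet] using this
    have hbd : b ^ 4 * d = 0 := by
      have : b ^ 4 * d * (a * d - b * c) = 0 := by linear_combination a * h2 - c * h1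
      simpa [hdet] using this
    simp only [mul_eq_zero, pow_eq_zero_iff, ne_eq, OfNat.ofNat_ne_zero, not_false_eq_true]
      at hac hbd
    rcases hac with rfl | rfl <;> rcases hbd with rfl | rfl <;> simp_all
  · have key : ∀ u v : ℂ, u ≠ 0 → u ^ 6 = v ^ 6 →
        ∃ l : ℂˣ, (l : ℂ) = u ^ 6 ∧ (l : ℂ) = v ^ 6 := fun u v hu h =>
      ⟨Units.mk0 (u ^ 6) (pow_ne_zero _ hu), rfl, h⟩
    rintro (⟨rfl, rfl, h⟩ | ⟨rfl, rfl, h⟩)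
    · obtain ⟨l, h1, h2⟩ := key a d (by rintro rfl; simp at hdet) h
      refine ⟨l, ?_⟩
      simp only [substAct, map_add, map_pow, aeval_X, smul_eq_C_mul]
      have e1 := congrArg (C (σ := Fin 2)) h1
      have e2 := congrArg (C (σ := Fin 2)) h2
      simp only [map_pow] at e1 e2
      simp
      linear_combination -X 0 ^ 6 * e1 - X 1 ^ 6 * e2
    · obtain ⟨l, h1, h2⟩ := key b c (by rintro rfl; simp at hdet) h
      refine ⟨l, ?_⟩
      simp only [substAct, map_add, map_pow, aeval_X, smul_eq_C_mul]
      have e1 := congrArg (C (σ := Fin 2)) h1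
      have e2 := congrArg (C (σ := Fin 2)) h2
      simp only [map_pow] at e1 e2
      simp
      linear_combination -X 0 ^ 6 * e1 - X 1 ^ 6 * e2

lemma det_ne (M : GL (Fin 2) ℂ) :
    M 0 0 * M 1 1 - M 0 1 * M 1 0 ≠ 0 := by
  rw [← Matrix.det_fin_two]
  exact ((Matrix.isUnit_iff_isUnit_det _).1 M.isUnit).ne_zero

/-- The exponential `E k = ω ^ k` from `ℤ/6` onto the sixth roots of unity and its inverse, the
discrete logarithm, packaged as a function on all of `ℂ` whose values elsewhere are irrelevant. -/
lemma exists_dlog (ω : ℂ) (hω : IsPrimitiveRoot ω 6) :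
    ∃ (E : ZMod 6 → ℂ) (dlog : ℂ → ZMod 6), (∀ k, E k ^ 6 = 1) ∧ (∀ k, dlog (E k) = k) ∧
      dlog 1 = 0 ∧ (∀ z, z ^ 6 = 1 → E (dlog z) = z) ∧
      (∀ z w, z ^ 6 = 1 → w ^ 6 = 1 → dlog (z * w) = dlog z + dlog w) ∧
      (∀ z w, z ^ 6 = 1 → w ^ 6 = 1 → dlog (z / w) = dlog z - dlog w) := by
  let E := AddChar.zmodChar 6 hω.pow_eq_one
  have inj : Function.Injective E := fun i j h =>
    ZMod.val_injective 6 (hω.pow_inj (ZMod.val_lt i) (ZMod.val_lt j) h)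
  have E6 : ∀ k, E k ^ 6 = 1 := by
    intro k
    rw [AddChar.zmodChar_apply, ← pow_mul, mul_comm, pow_mul, hω.pow_eq_one, one_pow]
  have ex : ∀ z : ℂ, ∃ k, z ^ 6 = 1 → E k = z := by
    intro z
    by_cases hz : z ^ 6 = 1
    · obtain ⟨i, hi, h⟩ := hω.eq_pow_of_pow_eq_one hz
      refine ⟨i, fun _ => ?_⟩
      rw [AddChar.zmodChar_apply, ZMod.val_natCast_of_lt hi, h]
    · exact ⟨0, fun h => absurd h hz⟩
  choose dlog hd using ex
  refine ⟨E, dlog, E6, fun k => inj (hd _ (E6 k)), inj ?_, hd, ?_, ?_⟩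
  · rw [hd 1 (one_pow _), AddChar.map_zero_eq_one]
  · intro z w hz hw
    apply inj
    rw [AddChar.map_add_eq_mul, hd z hz, hd w hw, hd _ (by rw [mul_pow, hz, hw, one_mul])]
  · intro z w hz hw
    apply inj
    rw [AddChar.map_sub_eq_div, hd z hz, hd w hw, hd _ (by rw [div_pow, hz, hw, div_one])]

/-- Let `F = x⁶ + y⁶` and let `H ≤ GL₂(ℂ)` be the subgroup of
matrices `M` for which the substituted form is a nonzero scalar multiple of `F`.
Then `H` contains the scalar matrices `ℂˣ·I`; the quotient `H/(ℂˣ·I)` is isomorphic to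
the dihedral group of order 12 (expressed as a surjective homomorphism
`H → DihedralGroup 6` whose kernel is exactly the scalar matrices); and, for `ζ` a
primitive 12th root of unity, `H` contains the four involutions represented by the
matrices `!![0,1;1,0]`, `!![-1,0;0,1]`, `!![0,1;ζ⁴,0]`, `!![0,1;ζ⁸,0]` (i.e. the maps
`[x,y] ↦ [y,x]`, `[x,y] ↦ [-x,y]`, `[x,y] ↦ [ζ⁴y,x]`, `[x,y] ↦ [ζ⁸y,x]`). -/
theorem stmt19 (ζ : ℂ) (hζ : IsPrimitiveRoot ζ 12)
    (H : Subgroup (GL (Fin 2) ℂ))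
    (hH : ∀ M : GL (Fin 2) ℂ, M ∈ H ↔ ∃ c : ℂˣ,
      substAct (M : Matrix (Fin 2) (Fin 2) ℂ) (X 0 ^ 6 + X 1 ^ 6) =
        (c : ℂ) • ((X 0 : MvPolynomial (Fin 2) ℂ) ^ 6 + X 1 ^ 6)) :
    (∀ u : ℂˣ, scalarGL u ∈ H) ∧
    (∃ φ : H →* DihedralGroup 6, Function.Surjective φ ∧
      ∀ M : H, φ M = 1 ↔ ∃ u : ℂˣ, (M : GL (Fin 2) ℂ) = scalarGL u) ∧
    (∃ M₁ M₂ M₃ M₄ : GL (Fin 2) ℂ, M₁ ∈ H ∧ M₂ ∈ H ∧ M₃ ∈ H ∧ M₄ ∈ H ∧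
      (M₁ : Matrix (Fin 2) (Fin 2) ℂ) = !![0, 1; 1, 0] ∧
      (M₂ : Matrix (Fin 2) (Fin 2) ℂ) = !![-1, 0; 0, 1] ∧
      (M₃ : Matrix (Fin 2) (Fin 2) ℂ) = !![0, 1; ζ ^ 4, 0] ∧
      (M₄ : Matrix (Fin 2) (Fin 2) ℂ) = !![0, 1; ζ ^ 8, 0]) := by
  have mem : ∀ M : GL (Fin 2) ℂ, M ∈ H ↔
      (M 0 1 = 0 ∧ M 1 0 = 0 ∧ M 0 0 ^ 6 = M 1 1 ^ 6) ∨
      (M 0 0 = 0 ∧ M 1 1 = 0 ∧ M 0 1 ^ 6 = M 1 0 ^ 6) := by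
    intro M
    rw [hH, ← stab_iff _ _ _ _ (det_ne M), ← Matrix.eta_fin_two]
  have diag : ∀ a d : ℂ, a ≠ 0 → a ^ 6 = d ^ 6 →
      ∃ M ∈ H, (M : Matrix (Fin 2) (Fin 2) ℂ) = !![a, 0; 0, d] := by
    intro a d ha h
    have hd : d ≠ 0 := by rintro rfl; simp_all
    refine ⟨Matrix.GeneralLinearGroup.mkOfDetNeZero !![a, 0; 0, d] (by simp [ha, hd]), ?_, rfl⟩
    rw [mem]
    exact Or.inl ⟨rfl, rfl, h⟩
  have anti : ∀ b c : ℂ, b ≠ 0 → b ^ 6 = c ^ 6 →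
      ∃ M ∈ H, (M : Matrix (Fin 2) (Fin 2) ℂ) = !![0, b; c, 0] := by
    intro b c hb h
    have hc : c ≠ 0 := by rintro rfl; simp_all
    refine ⟨Matrix.GeneralLinearGroup.mkOfDetNeZero !![0, b; c, 0] (by simp [hb, hc]), ?_, rfl⟩
    rw [mem]
    exact Or.inr ⟨rfl, rfl, h⟩
  have scal : ∀ u : ℂˣ, (scalarGL u : Matrix (Fin 2) (Fin 2) ℂ) = !![(u : ℂ), 0; 0, (u : ℂ)] := by
    intro u
    ext i j
    fin_cases i <;> fin_cases j <;> simp [scalarGL, Matrix.algebraMap_matrix_apply]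
  have ζ12 : ζ ^ 12 = 1 := hζ.pow_eq_one
  refine ⟨?_, ?_, ?_⟩
  · intro u
    rw [mem, scal]
    simp
  · obtain ⟨E, dlog, E6, dE, d1, Ed, dmul, ddiv⟩ :=
      exists_dlog (ζ ^ 2) (hζ.pow (by norm_num) (by norm_num))
    -- For invertible `M` in `H`, the vanishing of `M 0 1` separates the two shapes.
    let f : H → DihedralGroup 6 := fun M =>
      if (M : GL (Fin 2) ℂ) 0 1 = 0 then
        .r (dlog ((M : GL (Fin 2) ℂ) 1 1 / (M : GL (Fin 2) ℂ) 0 0))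
      else .sr (dlog ((M : GL (Fin 2) ℂ) 0 1 / (M : GL (Fin 2) ℂ) 1 0))
    have shape : ∀ M : H,
        (∃ a d : ℂ, a ≠ 0 ∧ d ≠ 0 ∧ (d / a) ^ 6 = 1 ∧
          ((M : GL (Fin 2) ℂ) : Matrix (Fin 2) (Fin 2) ℂ) = !![a, 0; 0, d]) ∨
        (∃ b c : ℂ, b ≠ 0 ∧ c ≠ 0 ∧ (b / c) ^ 6 = 1 ∧
          ((M : GL (Fin 2) ℂ) : Matrix (Fin 2) (Fin 2) ℂ) = !![0, b; c, 0]) := by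
      intro M
      have hdet := det_ne M
      have hM := Matrix.eta_fin_two ((M : GL (Fin 2) ℂ) : Matrix (Fin 2) (Fin 2) ℂ)
      rcases (mem M).1 M.2 with ⟨hb, hc, h⟩ | ⟨ha, hd, h⟩
      · rw [hb, hc] at hM hdet
        rw [mul_zero, sub_zero] at hdet
        have hn := mul_ne_zero_iff.1 hdet
        refine Or.inl ⟨_, _, hn.1, hn.2, ?_, hM⟩
        rw [div_pow, h, div_self (pow_ne_zero _ hn.2)]
      · rw [ha, hd] at hM hdet
        rw [mul_zero, zero_sub] at hdet
        have hn := mul_ne_zero_iff.1 (neg_ne_zero.1 hdet)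
        refine Or.inr ⟨_, _, hn.1, hn.2, ?_, hM⟩
        rw [div_pow, h, div_self (pow_ne_zero _ hn.2)]
    have f_diag : ∀ (M : H) (a d : ℂ),
        ((M : GL (Fin 2) ℂ) : Matrix (Fin 2) (Fin 2) ℂ) = !![a, 0; 0, d] →
        f M = .r (dlog (d / a)) := by
      intro M a d h
      simp [f, h]
    have f_anti : ∀ (M : H) (b c : ℂ), b ≠ 0 →
        ((M : GL (Fin 2) ℂ) : Matrix (Fin 2) (Fin 2) ℂ) = !![0, b; c, 0] →
        f M = .sr (dlog (b / c)) := by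
      intro M b c hb h
      simp [f, h, hb]
    refine ⟨MonoidHom.mk' f ?_, ?_, ?_⟩
    · intro M N
      have coe : (((M * N : H) : GL (Fin 2) ℂ) : Matrix (Fin 2) (Fin 2) ℂ) =
        ((M : GL (Fin 2) ℂ) : Matrix (Fin 2) (Fin 2) ℂ) * ((N : GL (Fin 2) ℂ) : _) := rfl
      rcases shape M with ⟨a, d, ha, hd, h6, hM⟩ | ⟨b, c, hb, hc, h6, hM⟩ <;>
      rcases shape N with ⟨a', d', ha', hd', h6', hN⟩ | ⟨b', c', hb', hc', h6', hN⟩ <;>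
      rw [hM, hN, Matrix.mul_fin_two] at coe <;>
      simp only [mul_zero, zero_mul, add_zero, zero_add] at coe
      · rw [f_diag _ _ _ hM, f_diag _ _ _ hN, f_diag _ _ _ coe, DihedralGroup.r_mul_r,
          ← dmul _ _ h6 h6', div_mul_div_comm]
      · rw [f_diag _ _ _ hM, f_anti _ _ _ hb' hN, f_anti _ _ _ (mul_ne_zero ha hb') coe,
          DihedralGroup.r_mul_sr, ← ddiv _ _ h6' h6, div_div_div_eq, mul_comm a, mul_comm d]
      · rw [f_anti _ _ _ hb hM, f_diag _ _ _ hN, f_anti _ _ _ (mul_ne_zero hb hd') coe,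
          DihedralGroup.sr_mul_r, ← dmul _ _ h6 h6', div_mul_div_comm]
      · rw [f_anti _ _ _ hb hM, f_anti _ _ _ hb' hN, f_diag _ _ _ coe,
          DihedralGroup.sr_mul_sr, ← ddiv _ _ h6' h6, div_div_div_eq, mul_comm c, mul_comm b]
    · have E0 : ∀ k, E k ≠ 0 := fun k h => by simpa [h] using E6 k
      rintro (k | k)
      · obtain ⟨M, hMH, hM⟩ := diag 1 (E k) one_ne_zero (by rw [E6, one_pow])
        exact ⟨⟨M, hMH⟩, by simpa [dE] using f_diag ⟨M, hMH⟩ _ _ hM⟩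
      · obtain ⟨M, hMH, hM⟩ := anti (E k) 1 (E0 k) (by rw [E6, one_pow])
        exact ⟨⟨M, hMH⟩, by simpa [dE] using f_anti ⟨M, hMH⟩ _ _ (E0 k) hM⟩
    · intro M
      change f M = 1 ↔ _
      constructor
      · intro h
        rcases shape M with ⟨a, d, ha, hd, h6, hM⟩ | ⟨b, c, hb, hc, h6, hM⟩
        · rw [f_diag _ _ _ hM, DihedralGroup.one_def, DihedralGroup.r.injEq, ← d1] at h
          have h' := congrArg E h
          rw [Ed _ h6, Ed _ (one_pow _), div_eq_one_iff_eq ha] at h'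
          subst h'
          exact ⟨Units.mk0 d ha, Units.ext (by rw [hM, scal, Units.val_mk0])⟩
        · rw [f_anti _ _ _ hb hM, DihedralGroup.one_def] at h
          cases h
      · rintro ⟨u, hu⟩
        rw [f_diag M u u (by rw [hu, scal]), div_self u.ne_zero, d1, DihedralGroup.one_def]
  · obtain ⟨M₁, m₁, h₁⟩ := anti 1 1 one_ne_zero rfl
    obtain ⟨M₂, m₂, h₂⟩ := diag (-1) 1 (by norm_num) (by norm_num)
    obtain ⟨M₃, m₃, h₃⟩ := anti 1 (ζ ^ 4) one_ne_zero (by linear_combination (-ζ ^ 12 - 1) * ζ12)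
    obtain ⟨M₄, m₄, h₄⟩ := anti 1 (ζ ^ 8) one_ne_zero
      (by linear_combination (-ζ ^ 36 - ζ ^ 24 - ζ ^ 12 - 1) * ζ12)
    exact ⟨M₁, M₂, M₃, M₄, m₁, m₂, m₃, m₄, h₁, h₂, h₃, h₄⟩
end
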